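/- arXiv:1305.4090 — 2 statements merged into one kernel-verified Lean document; each statement's English description precedes it below -/
import Mathlib

section
/- Let m be an order function on T*ℝ such that m^{−1} is also an order function. Let a ∈ S(1) and e ∈ S(m), and assume there is c > 0 with e(x,ξ,h) ≥ c·m(x,ξ) on a neighborhood of the support of a. Then for every N ∈ ℕ there exist q ∈ S(m^{−1}) and r ∈ S(1) such that, for every h ∈ (0,1], Op_h(a) = Op_h(e)∘Op_h(q) + h^N·Op_h(r) as operators on the Schwartz space 𝒮(ℝ); similarly there exist q̃ ∈ S(m^{−1}), r̃ ∈ S(1) with Op_h(a) = Op_h(q̃)∘Op_h(e) + h^N·Op_h(r̃). Moreover one may take q = q₀ + h·q₁ with q₀, q₁ ∈ S(m^{−1}) and q₀ = a/e (extended by zero off the support of a). -/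
open MeasureTheory

noncomputable section

/-- Fourier transform, convention `û ξ = ∫ e^{-iyξ} u y dy`. -/
def FT (u : ℝ → ℂ) (ξ : ℝ) : ℂ := ∫ y : ℝ, Complex.exp (-(Complex.I * y * ξ)) * u y

/-- Semiclassical quantization `Op_h(a)u(x) = (2π)⁻¹ ∫ e^{ixξ} a(x,hξ) û(ξ) dξ`. -/
def Op (h : ℝ) (a : ℝ → ℝ → ℂ) (u : ℝ → ℂ) : ℝ → ℂ := fun x =>
  (2 * Real.pi : ℂ)⁻¹ * ∫ ξ : ℝ, Complex.exp (Complex.I * x * ξ) * a x (h * ξ) * FT u ξ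

/-- Mixed partial derivative `∂_x^α ∂_ξ^β a`. -/
def pd (α β : ℕ) (a : ℝ → ℝ → ℂ) (x ξ : ℝ) : ℂ :=
  iteratedDeriv α (fun x' => iteratedDeriv β (a x') ξ) x

/-- An order function on `T*ℝ`. -/
def IsOrderFunction (m : ℝ → ℝ → ℝ) : Prop :=
  (∀ x ξ : ℝ, 0 < m x ξ) ∧ ContDiff ℝ (⊤ : ℕ∞) (fun q : ℝ × ℝ => m q.1 q.2) ∧
  ∃ C₀ > (0:ℝ), ∃ N₀ : ℕ, ∀ x ξ y η : ℝ,
    m x ξ ≤ C₀ * (1 + |x - y| + |ξ - η|) ^ N₀ * m y η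

/-- The symbol class `S(m)` of `h`-dependent symbols. -/
def SymS (m : ℝ → ℝ → ℝ) (a : ℝ → ℝ → ℝ → ℂ) : Prop :=
  (∀ h ∈ Set.Ioc (0:ℝ) 1, ContDiff ℝ (⊤ : ℕ∞) (fun q : ℝ × ℝ => a h q.1 q.2)) ∧
  ∀ α β : ℕ, ∃ C : ℝ, ∀ h ∈ Set.Ioc (0:ℝ) 1, ∀ x ξ : ℝ, ‖pd α β (a h) x ξ‖ ≤ C * m x ξ

section

open Filter Topology

/-! ### Partial derivatives of smooth functions of two real variables -/

def Dx (a : ℝ → ℝ → ℂ) : ℝ → ℝ → ℂ := fun x ξ => deriv (fun x' => a x' ξ) x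

def Dk (a : ℝ → ℝ → ℂ) : ℝ → ℝ → ℂ := fun x ξ => deriv (a x) ξ

def Sm2 (a : ℝ → ℝ → ℂ) : Prop := ContDiff ℝ (⊤ : ℕ∞) (fun q : ℝ × ℝ => a q.1 q.2)

lemma Sm2.hfd {a : ℝ → ℝ → ℂ} (h : Sm2 a) (x ξ : ℝ) :
    HasFDerivAt (fun q : ℝ × ℝ => a q.1 q.2)
      (fderiv ℝ (fun q : ℝ × ℝ => a q.1 q.2) (x, ξ)) (x, ξ) :=
  ((h.differentiable (by simp)) (x, ξ)).hasFDerivAt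

lemma Sm2.hx' {a : ℝ → ℝ → ℂ} (h : Sm2 a) (x ξ : ℝ) :
    HasDerivAt (fun x' => a x' ξ) (fderiv ℝ (fun q : ℝ × ℝ => a q.1 q.2) (x, ξ) (1, 0)) x := by
  have := (h.hfd x ξ).comp_hasDerivAt x ((hasDerivAt_id x).prodMk (hasDerivAt_const x ξ))
  exact this

lemma Sm2.hk' {a : ℝ → ℝ → ℂ} (h : Sm2 a) (x ξ : ℝ) :
    HasDerivAt (a x) (fderiv ℝ (fun q : ℝ × ℝ => a q.1 q.2) (x, ξ) (0, 1)) ξ := by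
  have := (h.hfd x ξ).comp_hasDerivAt ξ ((hasDerivAt_const ξ x).prodMk (hasDerivAt_id ξ))
  exact this

lemma Sm2.hx {a : ℝ → ℝ → ℂ} (h : Sm2 a) (x ξ : ℝ) :
    HasDerivAt (fun x' => a x' ξ) (Dx a x ξ) x := by
  have := h.hx' x ξ
  rwa [← this.deriv] at this

lemma Sm2.hk {a : ℝ → ℝ → ℂ} (h : Sm2 a) (x ξ : ℝ) :
    HasDerivAt (a x) (Dk a x ξ) ξ := by
  have := h.hk' x ξ
  rwa [← this.deriv] at this

lemma Sm2.dx {a : ℝ → ℝ → ℂ} (h : Sm2 a) : Sm2 (Dx a) := by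
  have h1 : ContDiff ℝ (⊤ : ℕ∞) (fun q : ℝ × ℝ =>
      fderiv ℝ (fun q : ℝ × ℝ => a q.1 q.2) q (1, 0)) :=
    (h.fderiv_right (m := (⊤ : ℕ∞)) (by simp)).clm_apply contDiff_const
  have h2 : (fun q : ℝ × ℝ => fderiv ℝ (fun q : ℝ × ℝ => a q.1 q.2) q (1, 0))
      = fun q : ℝ × ℝ => Dx a q.1 q.2 := by
    funext q; exact (h.hx' q.1 q.2).unique (h.hx q.1 q.2)
  rw [h2] at h1; exact h1

lemma Sm2.dk {a : ℝ → ℝ → ℂ} (h : Sm2 a) : Sm2 (Dk a) := by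
  have h1 : ContDiff ℝ (⊤ : ℕ∞) (fun q : ℝ × ℝ =>
      fderiv ℝ (fun q : ℝ × ℝ => a q.1 q.2) q (0, 1)) :=
    (h.fderiv_right (m := (⊤ : ℕ∞)) (by simp)).clm_apply contDiff_const
  have h2 : (fun q : ℝ × ℝ => fderiv ℝ (fun q : ℝ × ℝ => a q.1 q.2) q (0, 1))
      = fun q : ℝ × ℝ => Dk a q.1 q.2 := by
    funext q; exact (h.hk' q.1 q.2).unique (h.hk q.1 q.2)
  rw [h2] at h1; exact h1

lemma Sm2.comm {a : ℝ → ℝ → ℂ} (h : Sm2 a) : Dx (Dk a) = Dk (Dx a) := by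
  funext x ξ
  set f := fun q : ℝ × ℝ => a q.1 q.2 with hf
  have hd : ∀ q, HasFDerivAt f (fderiv ℝ f q) q := fun q =>
    ((h.differentiable (by simp)) q).hasFDerivAt
  have hdd : HasFDerivAt (fderiv ℝ f) (fderiv ℝ (fderiv ℝ f) (x, ξ)) (x, ξ) :=
    (((h.fderiv_right (m := (⊤ : ℕ∞)) (by simp)).differentiable (by simp)) (x, ξ)).hasFDerivAt
  have hs := second_derivative_symmetric hd hdd (1, 0) (0, 1)
  have l1 : HasDerivAt (fun x' : ℝ => (x', ξ)) ((1 : ℝ), (0 : ℝ)) x :=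
    (hasDerivAt_id x).prodMk (hasDerivAt_const x ξ)
  have l2 : HasDerivAt (fun ξ' : ℝ => (x, ξ')) ((0 : ℝ), (1 : ℝ)) ξ :=
    (hasDerivAt_const ξ x).prodMk (hasDerivAt_id ξ)
  have k1 : HasDerivAt (fun x' : ℝ => fderiv ℝ f (x', ξ)) (fderiv ℝ (fderiv ℝ f) (x, ξ) (1, 0)) x :=
    HasFDerivAt.comp_hasDerivAt (x := x) (f := fun x' : ℝ => (x', ξ)) hdd l1
  have k2 : HasDerivAt (fun ξ' : ℝ => fderiv ℝ f (x, ξ')) (fderiv ℝ (fderiv ℝ f) (x, ξ) (0, 1)) ξ :=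
    HasFDerivAt.comp_hasDerivAt (x := ξ) (f := fun ξ' : ℝ => (x, ξ')) hdd l2
  have e1 : HasDerivAt (fun x' => Dk a x' ξ) (fderiv ℝ (fderiv ℝ f) (x, ξ) (1, 0) (0, 1)) x := by
    have h1 := k1.clm_apply (hasDerivAt_const x ((0 : ℝ), (1 : ℝ)))
    rw [map_zero, add_zero] at h1
    have h2 : (fun x' => Dk a x' ξ) = fun x' => fderiv ℝ f (x', ξ) (0, 1) := by
      funext x'; exact (h.hk x' ξ).unique (h.hk' x' ξ)
    rw [h2]; exact h1
  have e2 : HasDerivAt (fun ξ' => Dx a x ξ') (fderiv ℝ (fderiv ℝ f) (x, ξ) (0, 1) (1, 0)) ξ := by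
    have h1 := k2.clm_apply (hasDerivAt_const ξ ((1 : ℝ), (0 : ℝ)))
    rw [map_zero, add_zero] at h1
    have h2 : (fun x' => Dx a x x') = fun x' => fderiv ℝ f (x, x') (1, 0) := by
      funext x'; exact (h.hx x x').unique (h.hx' x x')
    rw [h2]; exact h1
  have e3 := e1.deriv
  have e4 := e2.deriv
  rw [← hs] at e4
  exact e3.trans e4.symm

lemma Sm2.itx {a : ℝ → ℝ → ℂ} (h : Sm2 a) (n : ℕ) : Sm2 (Dx^[n] a) := by
  induction n generalizing a with
  | zero => exact h
  | succ n ih => exact ih h.dx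

lemma Sm2.itk {a : ℝ → ℝ → ℂ} (h : Sm2 a) (n : ℕ) : Sm2 (Dk^[n] a) := by
  induction n generalizing a with
  | zero => exact h
  | succ n ih => exact ih h.dk

lemma Sm2.comm_itk {a : ℝ → ℝ → ℂ} (h : Sm2 a) (n : ℕ) : Dx (Dk^[n] a) = Dk^[n] (Dx a) := by
  induction n generalizing a with
  | zero => rfl
  | succ n ih =>
    rw [Function.iterate_succ_apply, ih h.dk, h.comm, ← Function.iterate_succ_apply]

lemma iter_Dk (a : ℝ → ℝ → ℂ) (n : ℕ) (x ξ : ℝ) : (Dk^[n] a) x ξ = iteratedDeriv n (a x) ξ := by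
  induction n generalizing ξ with
  | zero => simp
  | succ n ih =>
    rw [Function.iterate_succ_apply', iteratedDeriv_succ]
    unfold Dk
    congr 1
    funext y; exact ih y

lemma iter_Dx (a : ℝ → ℝ → ℂ) (n : ℕ) (x ξ : ℝ) :
    (Dx^[n] a) x ξ = iteratedDeriv n (fun x' => a x' ξ) x := by
  induction n generalizing x with
  | zero => simp
  | succ n ih =>
    rw [Function.iterate_succ_apply', iteratedDeriv_succ]
    unfold Dx
    congr 1
    funext y; exact ih y

lemma pd_eq (α β : ℕ) (a : ℝ → ℝ → ℂ) : pd α β a = Dx^[α] (Dk^[β] a) := by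
  funext x ξ
  rw [iter_Dx, pd]
  congr 1
  funext y; exact (iter_Dk a β y ξ).symm

lemma Sm2.secx {a : ℝ → ℝ → ℂ} (h : Sm2 a) (ξ : ℝ) :
    ContDiff ℝ (⊤ : ℕ∞) (fun x => a x ξ) :=
  ContDiff.comp h (contDiff_id.prodMk contDiff_const)

lemma Sm2.seck {a : ℝ → ℝ → ℂ} (h : Sm2 a) (x : ℝ) :
    ContDiff ℝ (⊤ : ℕ∞) (a x) :=
  ContDiff.comp (g := fun q : ℝ × ℝ => a q.1 q.2) (f := fun ξ : ℝ => (x, ξ)) h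
    (contDiff_const.prodMk contDiff_id)

lemma Sm2.add {a b : ℝ → ℝ → ℂ} (ha : Sm2 a) (hb : Sm2 b) : Sm2 (fun x ξ => a x ξ + b x ξ) :=
  ContDiff.add ha hb

lemma Sm2.mul {a b : ℝ → ℝ → ℂ} (ha : Sm2 a) (hb : Sm2 b) : Sm2 (fun x ξ => a x ξ * b x ξ) :=
  ContDiff.mul ha hb

lemma Sm2.const (c : ℂ) : Sm2 (fun _ _ => c) := contDiff_const

lemma Dx_add {a b : ℝ → ℝ → ℂ} (ha : Sm2 a) (hb : Sm2 b) :
    Dx (fun x ξ => a x ξ + b x ξ) = fun x ξ => Dx a x ξ + Dx b x ξ := by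
  funext x ξ; exact ((ha.hx x ξ).add (hb.hx x ξ)).deriv

lemma Dk_add {a b : ℝ → ℝ → ℂ} (ha : Sm2 a) (hb : Sm2 b) :
    Dk (fun x ξ => a x ξ + b x ξ) = fun x ξ => Dk a x ξ + Dk b x ξ := by
  funext x ξ; exact ((ha.hk x ξ).add (hb.hk x ξ)).deriv

lemma Dx_mul {a b : ℝ → ℝ → ℂ} (ha : Sm2 a) (hb : Sm2 b) :
    Dx (fun x ξ => a x ξ * b x ξ) = fun x ξ => Dx a x ξ * b x ξ + a x ξ * Dx b x ξ := by
  funext x ξ; exact ((ha.hx x ξ).mul (hb.hx x ξ)).deriv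

lemma Dk_mul {a b : ℝ → ℝ → ℂ} (ha : Sm2 a) (hb : Sm2 b) :
    Dk (fun x ξ => a x ξ * b x ξ) = fun x ξ => Dk a x ξ * b x ξ + a x ξ * Dk b x ξ := by
  funext x ξ; exact ((ha.hk x ξ).mul (hb.hk x ξ)).deriv

lemma Dx_const (c : ℂ) : Dx (fun _ _ => c) = fun _ _ => 0 := by
  funext x ξ; exact (hasDerivAt_const x c).deriv

lemma Dk_const (c : ℂ) : Dk (fun _ _ => c) = fun _ _ => 0 := by
  funext x ξ; exact (hasDerivAt_const ξ c).deriv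

/-! ### Symbol classes, recursively -/

section Sym

variable {ι : Type} {m m₁ m₂ : ℝ → ℝ → ℝ} {a b : ι → ℝ → ℝ → ℂ}

def Bnd (m : ℝ → ℝ → ℝ) (a : ι → ℝ → ℝ → ℂ) : Prop :=
  ∃ C : ℝ, 0 ≤ C ∧ ∀ i x ξ, ‖a i x ξ‖ ≤ C * m x ξ

def Cl (m : ℝ → ℝ → ℝ) : ℕ → (ι → ℝ → ℝ → ℂ) → Prop
  | 0, a => Bnd m a
  | n + 1, a => Bnd m a ∧ Cl m n (fun i => Dx (a i)) ∧ Cl m n (fun i => Dk (a i))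

def Sy (m : ℝ → ℝ → ℝ) (a : ι → ℝ → ℝ → ℂ) : Prop := (∀ i, Sm2 (a i)) ∧ ∀ n, Cl m n a

lemma Cl.bnd {n : ℕ} (h : Cl m n a) : Bnd m a := by
  cases n with
  | zero => exact h
  | succ n => exact h.1

lemma Cl.down {n : ℕ} (h : Cl m (n + 1) a) : Cl m n a := by
  induction n generalizing a with
  | zero => exact h.1
  | succ n ih => exact ⟨h.1, ih h.2.1, ih h.2.2⟩

lemma Bnd.add (ha : Bnd m a) (hb : Bnd m b) : Bnd m (fun i x ξ => a i x ξ + b i x ξ) := by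
  obtain ⟨C, hC, h1⟩ := ha
  obtain ⟨D, hD, h2⟩ := hb
  refine ⟨C + D, by positivity, fun i x ξ => (norm_add_le _ _).trans ?_⟩
  have := h1 i x ξ
  have := h2 i x ξ
  nlinarith

lemma Bnd.mul (ha : Bnd m₁ a) (hb : Bnd m₂ b) (hm : ∀ x ξ, 0 ≤ m₁ x ξ) :
    Bnd (fun x ξ => m₁ x ξ * m₂ x ξ) (fun i x ξ => a i x ξ * b i x ξ) := by
  obtain ⟨C, hC, h1⟩ := ha
  obtain ⟨D, hD, h2⟩ := hb
  refine ⟨C * D, by positivity, fun i x ξ => ?_⟩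
  rw [norm_mul]
  calc _ ≤ (C * m₁ x ξ) * (D * m₂ x ξ) :=
        mul_le_mul (h1 i x ξ) (h2 i x ξ) (norm_nonneg _) (mul_nonneg hC (hm x ξ))
    _ = _ := by ring

lemma Cl.add {n : ℕ} (hsa : ∀ i, Sm2 (a i)) (hsb : ∀ i, Sm2 (b i)) (ha : Cl m n a)
    (hb : Cl m n b) : Cl m n (fun i x ξ => a i x ξ + b i x ξ) := by
  induction n generalizing a b with
  | zero => exact Bnd.add ha hb
  | succ n ih =>
    refine ⟨ha.1.add hb.1, ?_, ?_⟩
    · simp_rw [fun i => Dx_add (hsa i) (hsb i)]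
      exact ih (fun i => (hsa i).dx) (fun i => (hsb i).dx) ha.2.1 hb.2.1
    · simp_rw [fun i => Dk_add (hsa i) (hsb i)]
      exact ih (fun i => (hsa i).dk) (fun i => (hsb i).dk) ha.2.2 hb.2.2

lemma Cl.mul {n : ℕ} (hsa : ∀ i, Sm2 (a i)) (hsb : ∀ i, Sm2 (b i)) (ha : Cl m₁ n a)
    (hb : Cl m₂ n b) (hm : ∀ x ξ, 0 ≤ m₁ x ξ) :
    Cl (fun x ξ => m₁ x ξ * m₂ x ξ) n (fun i x ξ => a i x ξ * b i x ξ) := by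
  induction n generalizing a b with
  | zero => exact Bnd.mul ha hb hm
  | succ n ih =>
    refine ⟨ha.1.mul hb.1 hm, ?_, ?_⟩
    · simp_rw [fun i => Dx_mul (hsa i) (hsb i)]
      exact Cl.add (fun i => (hsa i).dx.mul (hsb i)) (fun i => (hsa i).mul (hsb i).dx)
        (ih (fun i => (hsa i).dx) hsb ha.2.1 hb.down)
        (ih hsa (fun i => (hsb i).dx) ha.down hb.2.1)
    · simp_rw [fun i => Dk_mul (hsa i) (hsb i)]
      exact Cl.add (fun i => (hsa i).dk.mul (hsb i)) (fun i => (hsa i).mul (hsb i).dk)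
        (ih (fun i => (hsa i).dk) hsb ha.2.2 hb.down)
        (ih hsa (fun i => (hsb i).dk) ha.down hb.2.2)

lemma Bnd.zero (hm : ∀ x ξ, 0 ≤ m x ξ) : Bnd m (fun (_ : ι) _ _ => (0 : ℂ)) :=
  ⟨0, le_rfl, fun i x ξ => by simp⟩

lemma Cl.zero {n : ℕ} (hm : ∀ x ξ, 0 ≤ m x ξ) : Cl m n (fun (_ : ι) _ _ => (0 : ℂ)) := by
  induction n with
  | zero => exact Bnd.zero hm
  | succ n ih =>
    refine ⟨Bnd.zero hm, ?_, ?_⟩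
    · simp_rw [Dx_const]; exact ih
    · simp_rw [Dk_const]; exact ih

lemma Sy.zero (hm : ∀ x ξ, 0 ≤ m x ξ) : Sy m (fun (_ : ι) _ _ => (0 : ℂ)) :=
  ⟨fun _ => Sm2.const 0, fun _ => Cl.zero hm⟩

lemma Sy.const (c : ι → ℂ) (C : ℝ) (hc : ∀ i, ‖c i‖ ≤ C) :
    Sy (fun _ _ => 1) (fun i _ _ => c i) := by
  have h0 : Bnd (fun _ _ => 1) (fun i (_ _ : ℝ) => c i) :=
    ⟨max C 0, le_max_right _ _, fun i x ξ => by simpa using Or.inl (hc i)⟩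
  refine ⟨fun i => Sm2.const _, fun n => ?_⟩
  cases n with
  | zero => exact h0
  | succ n =>
    refine ⟨h0, ?_, ?_⟩
    · simp_rw [Dx_const]; exact Cl.zero (by simp)
    · simp_rw [Dk_const]; exact Cl.zero (by simp)

lemma Sy.bnd (h : Sy m a) : Bnd m a := h.2 0

lemma Sy.dx (h : Sy m a) : Sy m (fun i => Dx (a i)) :=
  ⟨fun i => (h.1 i).dx, fun n => (h.2 (n + 1)).2.1⟩

lemma Sy.dk (h : Sy m a) : Sy m (fun i => Dk (a i)) :=
  ⟨fun i => (h.1 i).dk, fun n => (h.2 (n + 1)).2.2⟩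

lemma Sy.itx (h : Sy m a) (n : ℕ) : Sy m (fun i => Dx^[n] (a i)) := by
  induction n generalizing a with
  | zero => exact h
  | succ n ih => exact ih h.dx

lemma Sy.itk (h : Sy m a) (n : ℕ) : Sy m (fun i => Dk^[n] (a i)) := by
  induction n generalizing a with
  | zero => exact h
  | succ n ih => exact ih h.dk

lemma Sy.add (ha : Sy m a) (hb : Sy m b) : Sy m (fun i x ξ => a i x ξ + b i x ξ) :=
  ⟨fun i => (ha.1 i).add (hb.1 i), fun n => (ha.2 n).add ha.1 hb.1 (hb.2 n)⟩

lemma Sy.mul (ha : Sy m₁ a) (hb : Sy m₂ b) (hm : ∀ x ξ, 0 ≤ m₁ x ξ) :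
    Sy (fun x ξ => m₁ x ξ * m₂ x ξ) (fun i x ξ => a i x ξ * b i x ξ) :=
  ⟨fun i => (ha.1 i).mul (hb.1 i), fun n => (ha.2 n).mul ha.1 hb.1 (hb.2 n) hm⟩

lemma Sy.cmul (ha : Sy m a) (c : ι → ℂ) (C : ℝ) (hc : ∀ i, ‖c i‖ ≤ C) :
    Sy m (fun i x ξ => c i * a i x ξ) := by
  simpa using (Sy.const c C hc).mul ha (by simp)

lemma Sy.sum {J : Type} (s : Finset J) (f : J → ι → ℝ → ℝ → ℂ) (hm : ∀ x ξ, 0 ≤ m x ξ)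
    (h : ∀ j ∈ s, Sy m (f j)) : Sy m (fun i x ξ => ∑ j ∈ s, f j i x ξ) := by
  classical
  induction s using Finset.induction_on with
  | empty => simpa using Sy.zero hm
  | insert j s hj ih =>
    simp_rw [Finset.sum_insert hj]
    exact (h j (Finset.mem_insert_self _ _)).add
      (ih fun k hk => h k (Finset.mem_insert_of_mem hk))

lemma Bnd.mono {C : ℝ} (hC : 0 ≤ C) (h : Bnd m₁ a) (hm : ∀ x ξ, m₁ x ξ ≤ C * m₂ x ξ) :
    Bnd m₂ a := by
  obtain ⟨D, hD, h⟩ := h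
  refine ⟨D * C, by positivity, fun i x ξ => (h i x ξ).trans ?_⟩
  rw [mul_assoc]
  exact mul_le_mul_of_nonneg_left (hm x ξ) hD

lemma Sy.reindex {κ : Type} (h : Sy m a) (p : κ → ι) : Sy m (fun k => a (p k)) := by
  refine ⟨fun k => h.1 _, fun n => ?_⟩
  have : ∀ (n : ℕ) (a : ι → ℝ → ℝ → ℂ), Cl m n a → Cl m n (fun k => a (p k)) := by
    intro n
    induction n with
    | zero => rintro a ⟨C, hC, h⟩; exact ⟨C, hC, fun k => h (p k)⟩
    | succ n ih =>
      rintro a ⟨⟨C, hC, h⟩, h2, h3⟩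
      exact ⟨⟨C, hC, fun k => h (p k)⟩, ih _ h2, ih _ h3⟩
  exact this n a (h.2 n)

lemma Sy.of_pd (hs : ∀ i, Sm2 (a i))
    (h : ∀ α β : ℕ, Bnd m (fun i => Dx^[α] (Dk^[β] (a i)))) : Sy m a := by
  refine ⟨hs, fun n => ?_⟩
  induction n generalizing a with
  | zero => exact h 0 0
  | succ n ih =>
    refine ⟨h 0 0, ih (fun i => (hs i).dx) fun α β => ?_, ih (fun i => (hs i).dk) fun α β => ?_⟩
    · have := h (α + 1) β
      simp_rw [Function.iterate_succ_apply, fun i => (hs i).comm_itk β] at this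
      exact this
    · exact h α (β + 1)

lemma Sy.pd (h : Sy m a) (α β : ℕ) : Bnd m (fun i => Dx^[α] (Dk^[β] (a i))) :=
  ((h.itk β).itx α).bnd

end Sym

/-! ### One-variable functions of polynomial growth, in families -/

section PG

variable {κ : Type}

def PG (N : ℤ) (w : κ → ℝ) (F : κ → ℝ → ℂ) : Prop :=
  (∀ i, ContDiff ℝ (⊤ : ℕ∞) (F i)) ∧
    ∀ k : ℕ, ∃ C : ℝ, 0 ≤ C ∧ ∀ i y, ‖iteratedDeriv k (F i) y‖ ≤ C * w i * (1 + |y|) ^ N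

lemma jb_pos (y : ℝ) : 0 < 1 + |y| := by positivity

lemma one_le_jb (y : ℝ) : 1 ≤ 1 + |y| := by linarith [abs_nonneg y]

lemma cda {F : ℝ → ℂ} (h : ContDiff ℝ (⊤ : ℕ∞) F) (k : ℕ) (y : ℝ) : ContDiffAt ℝ k F y :=
  (h.of_le (by exact_mod_cast le_top)).contDiffAt

lemma cd_iter {F : ℝ → ℂ} (h : ContDiff ℝ (⊤ : ℕ∞) F) (k : ℕ) :
    ContDiff ℝ (⊤ : ℕ∞) (iteratedDeriv k F) := by
  rw [iteratedDeriv_eq_iterate]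
  exact h.iterate_deriv k

lemma cont_iter {F : ℝ → ℂ} (h : ContDiff ℝ (⊤ : ℕ∞) F) (k : ℕ) :
    Continuous (iteratedDeriv k F) := (cd_iter h k).continuous

lemma hd_iter {F : ℝ → ℂ} (h : ContDiff ℝ (⊤ : ℕ∞) F) (k : ℕ) (y : ℝ) :
    HasDerivAt (iteratedDeriv k F) (iteratedDeriv (k + 1) F y) y := by
  rw [iteratedDeriv_succ]
  exact ((cd_iter h k).differentiable (by simp) y).hasDerivAt

lemma PG.monoN {N N' : ℤ} {w : κ → ℝ} {F : κ → ℝ → ℂ} (h : PG N w F) (hN : N ≤ N')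
    (hw : ∀ i, 0 ≤ w i) : PG N' w F := by
  refine ⟨h.1, fun k => ?_⟩
  obtain ⟨C, hC, h⟩ := h.2 k
  refine ⟨C, hC, fun i y => (h i y).trans ?_⟩
  exact mul_le_mul_of_nonneg_left (zpow_le_zpow_right₀ (one_le_jb y) hN) (mul_nonneg hC (hw i))

lemma PG.monow {N : ℤ} {w w' : κ → ℝ} {F : κ → ℝ → ℂ} (h : PG N w F) (D : ℝ) (hD : 0 ≤ D)
    (hw : ∀ i, w i ≤ D * w' i) : PG N w' F := by
  refine ⟨h.1, fun k => ?_⟩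
  obtain ⟨C, hC, h⟩ := h.2 k
  refine ⟨C * D, mul_nonneg hC hD, fun i y => (h i y).trans ?_⟩
  refine mul_le_mul_of_nonneg_right ?_ (zpow_nonneg (jb_pos y).le _)
  rw [mul_assoc]
  exact mul_le_mul_of_nonneg_left (hw i) hC

lemma PG.reindex {κ' : Type} {N : ℤ} {w : κ → ℝ} {F : κ → ℝ → ℂ} (h : PG N w F) (p : κ' → κ) :
    PG N (fun i => w (p i)) (fun i => F (p i)) := by
  refine ⟨fun i => h.1 _, fun k => ?_⟩
  obtain ⟨C, hC, h⟩ := h.2 k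
  exact ⟨C, hC, fun i => h (p i)⟩

lemma PG.mul {N N' : ℤ} {w w' : κ → ℝ} {F G : κ → ℝ → ℂ} (hF : PG N w F) (hG : PG N' w' G)
    (hw : ∀ i, 0 ≤ w i) :
    PG (N + N') (fun i => w i * w' i) (fun i y => F i y * G i y) := by
  refine ⟨fun i => (hF.1 i).mul (hG.1 i), fun k => ?_⟩
  choose C hC h1 using hF.2
  choose D hD h2 using hG.2
  refine ⟨∑ j ∈ Finset.range (k + 1), k.choose j * C j * D (k - j),
    Finset.sum_nonneg fun j _ => by have := hC j; have := hD (k - j); positivity, fun i y => ?_⟩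
  rw [iteratedDeriv_fun_mul (cda (hF.1 i) k y) (cda (hG.1 i) k y), Finset.sum_mul, Finset.sum_mul]
  refine (norm_sum_le _ _).trans (Finset.sum_le_sum fun j _ => ?_)
  rw [norm_mul, norm_mul, Complex.norm_natCast, zpow_add₀ (jb_pos y).ne']
  have a1 := h1 j i y
  have a2 := h2 (k - j) i y
  have a3 := mul_le_mul a1 a2 (norm_nonneg _)
    (mul_nonneg (mul_nonneg (hC j) (hw i)) (zpow_nonneg (jb_pos y).le _))
  calc _ = (k.choose j : ℝ) * (‖iteratedDeriv j (F i) y‖ * ‖iteratedDeriv (k - j) (G i) y‖) := by ring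
    _ ≤ (k.choose j : ℝ) * _ := mul_le_mul_of_nonneg_left a3 (by positivity)
    _ = _ := by ring

lemma PG.add {N : ℤ} {w : κ → ℝ} {F G : κ → ℝ → ℂ} (hF : PG N w F) (hG : PG N w G) :
    PG N w (fun i y => F i y + G i y) := by
  refine ⟨fun i => (hF.1 i).add (hG.1 i), fun k => ?_⟩
  obtain ⟨C, hC, h1⟩ := hF.2 k
  obtain ⟨D, hD, h2⟩ := hG.2 k
  refine ⟨C + D, by positivity, fun i y => ?_⟩
  rw [iteratedDeriv_fun_add (cda (hF.1 i) k y) (cda (hG.1 i) k y), add_mul, add_mul]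
  exact (norm_add_le _ _).trans (add_le_add (h1 i y) (h2 i y))

lemma PG.cmul {N : ℤ} {w : κ → ℝ} {F : κ → ℝ → ℂ} (hF : PG N w F) (c : κ → ℂ) :
    PG N (fun i => ‖c i‖ * w i) (fun i y => c i * F i y) := by
  refine ⟨fun i => contDiff_const.mul (hF.1 i), fun k => ?_⟩
  obtain ⟨C, hC, h1⟩ := hF.2 k
  refine ⟨C, hC, fun i y => ?_⟩
  rw [iteratedDeriv_const_mul_field, norm_mul]
  calc _ ≤ ‖c i‖ * _ := mul_le_mul_of_nonneg_left (h1 i y) (norm_nonneg _)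
    _ = _ := by ring

lemma PG.deriv {N : ℤ} {w : κ → ℝ} {F : κ → ℝ → ℂ} (hF : PG N w F) :
    PG N w (fun i => deriv (F i)) := by
  refine ⟨fun i => by simpa [iteratedDeriv_one] using cd_iter (hF.1 i) 1, fun k => ?_⟩
  obtain ⟨C, hC, h1⟩ := hF.2 (k + 1)
  refine ⟨C, hC, fun i y => ?_⟩
  rw [← iteratedDeriv_succ']
  exact h1 i y

lemma PG.iter {N : ℤ} {w : κ → ℝ} {F : κ → ℝ → ℂ} (hF : PG N w F) (n : ℕ) :
    PG N w (fun i => iteratedDeriv n (F i)) := by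
  induction n with
  | zero => simpa using hF
  | succ n ih => simp_rw [iteratedDeriv_succ]; exact ih.deriv

lemma PG.const (c : κ → ℂ) : PG 0 (fun i => ‖c i‖) (fun i _ => c i) := by
  refine ⟨fun i => contDiff_const, fun k => ⟨1, by simp, fun i y => ?_⟩⟩
  rw [iteratedDeriv_const]
  split_ifs <;> simp

lemma PG.id : PG 1 (fun _ : κ => 1) (fun _ y => (y : ℂ)) := by
  have hd : ∀ y : ℝ, HasDerivAt (fun y : ℝ => (y : ℂ)) 1 y := fun y => by
    simpa using (hasDerivAt_id y).ofReal_comp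
  have hd' : _root_.deriv (fun y : ℝ => (y : ℂ)) = fun _ => 1 := by
    funext y; exact (hd y).deriv
  refine ⟨fun i => Complex.ofRealCLM.contDiff, fun k => ⟨1, by simp, fun i y => ?_⟩⟩
  cases k with
  | zero => simp
  | succ k =>
    rw [iteratedDeriv_succ', hd', iteratedDeriv_const]
    split_ifs <;> simp <;> positivity

/-- The weight `(1 + iσ)^{-K}`. -/
def W (K : ℕ) (σ : ℝ) : ℂ := ((1 + Complex.I * σ) ^ K)⁻¹

lemma one_add_ne (σ : ℝ) : (1 + Complex.I * σ) ≠ 0 := by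
  intro h
  have := congrArg Complex.re h
  simp at this

lemma norm_one_add (σ : ℝ) : (1 + |σ|) / 2 ≤ ‖1 + Complex.I * σ‖ := by
  have h1 := Complex.abs_re_le_norm (1 + Complex.I * σ)
  have h2 := Complex.abs_im_le_norm (1 + Complex.I * σ)
  simp at h1 h2
  linarith

lemma W_deriv (K : ℕ) (σ : ℝ) : HasDerivAt (W K) (-(K * Complex.I) * W (K + 1) σ) σ := by
  have h1 : HasDerivAt (fun σ : ℝ => 1 + Complex.I * (σ : ℂ)) Complex.I σ := by
    simpa using ((hasDerivAt_id σ).ofReal_comp.const_mul Complex.I).const_add 1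
  have h2 := (h1.pow K).inv (pow_ne_zero K (one_add_ne σ))
  refine h2.congr_deriv ?_
  unfold W
  have := one_add_ne σ
  cases K with
  | zero => simp
  | succ n =>
    simp only [Nat.add_sub_cancel, Pi.pow_apply]
    field_simp
    ring

lemma W_cd (K : ℕ) : ContDiff ℝ (⊤ : ℕ∞) (W K) := by
  unfold W
  refine ContDiff.inv ?_ fun σ => pow_ne_zero K (one_add_ne σ)
  exact (contDiff_const.add (contDiff_const.mul Complex.ofRealCLM.contDiff)).pow K

lemma W_iter (K k : ℕ) : ∃ c : ℂ, iteratedDeriv k (W K) = fun σ => c * W (K + k) σ := by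
  induction k with
  | zero => exact ⟨1, by simp⟩
  | succ k ih =>
    obtain ⟨c, hc⟩ := ih
    refine ⟨c * -((K + k : ℕ) * Complex.I), ?_⟩
    rw [iteratedDeriv_succ, hc]
    funext σ
    rw [((W_deriv (K + k) σ).const_mul c).deriv]
    ring_nf

lemma W_norm (K : ℕ) (σ : ℝ) : ‖W K σ‖ ≤ 2 ^ K * (1 + |σ|) ^ (-(K : ℤ)) := by
  unfold W
  rw [norm_inv, norm_pow, zpow_neg, zpow_natCast, ← inv_inv (2 ^ K : ℝ), ← mul_inv]
  apply inv_anti₀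
  · have := jb_pos σ; positivity
  · rw [← inv_pow, ← mul_pow]
    apply pow_le_pow_left₀ (by positivity)
    linarith [norm_one_add σ]

lemma PG.W (K : ℕ) : PG (-(K : ℤ)) (fun _ : κ => 1) (fun _ => W K) := by
  refine ⟨fun i => W_cd K, fun k => ?_⟩
  obtain ⟨c, hc⟩ := W_iter K k
  refine ⟨‖c‖ * 2 ^ (K + k), by positivity, fun i y => ?_⟩
  rw [hc, norm_mul]
  have h1 : (1 + |y|) ^ (-((K + k : ℕ) : ℤ)) ≤ (1 + |y|) ^ (-(K : ℤ)) :=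
    zpow_le_zpow_right₀ (one_le_jb y) (by push_cast; omega)
  calc _ ≤ ‖c‖ * (2 ^ (K + k) * (1 + |y|) ^ (-((K + k : ℕ) : ℤ))) := by
        gcongr; exact W_norm _ _
    _ ≤ ‖c‖ * (2 ^ (K + k) * (1 + |y|) ^ (-(K : ℤ))) := by gcongr
    _ = _ := by ring

/-! ### Integrability -/

lemma int_jb : Integrable (fun y : ℝ => (1 + |y|) ^ (-2 : ℤ)) := by
  have := integrable_one_add_norm (E := ℝ) (μ := volume) (r := 2) (by simp)
  refine this.congr (Eventually.of_forall fun y => ?_)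
  simp only [Real.norm_eq_abs]
  rw [show (-2 : ℝ) = ((-2 : ℤ) : ℝ) by norm_num, Real.rpow_intCast]

def c0 : ℝ := ∫ y : ℝ, (1 + |y|) ^ (-2 : ℤ)

lemma c0_nonneg : 0 ≤ c0 := integral_nonneg fun y => zpow_nonneg (jb_pos y).le _

lemma int_of_bd {f : ℝ → ℂ} (hf : Continuous f) (C : ℝ)
    (h : ∀ y, ‖f y‖ ≤ C * (1 + |y|) ^ (-2 : ℤ)) : Integrable f :=
  (int_jb.const_mul C).mono' hf.aestronglyMeasurable (Eventually.of_forall h)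

lemma norm_int_le {f : ℝ → ℂ} (C : ℝ)
    (h : ∀ y, ‖f y‖ ≤ C * (1 + |y|) ^ (-2 : ℤ)) : ‖∫ y, f y‖ ≤ C * c0 := by
  rw [c0, ← integral_const_mul]
  exact norm_integral_le_of_norm_le (int_jb.const_mul C) (Eventually.of_forall h)

lemma PG.integrable {N : ℤ} {w : κ → ℝ} {F : κ → ℝ → ℂ} (hF : PG N w F) (hN : N ≤ -2)
    (i : κ) (hw : 0 ≤ w i) (k : ℕ) : Integrable (iteratedDeriv k (F i)) := by
  obtain ⟨C, hC, h⟩ := hF.2 k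
  refine int_of_bd (cont_iter (hF.1 i) k) (C * w i) fun y => (h i y).trans ?_
  exact mul_le_mul_of_nonneg_left (zpow_le_zpow_right₀ (one_le_jb y) hN) (mul_nonneg hC hw)

lemma nexp (s y : ℝ) : ‖Complex.exp (-(Complex.I * s * y))‖ = 1 := by
  rw [Complex.norm_exp]; simp

lemma FT_norm_le (φ : ℝ → ℂ) (y : ℝ) : ‖FT φ y‖ ≤ ∫ s, ‖φ s‖ := by
  unfold FT
  refine (norm_integral_le_integral_norm _).trans (le_of_eq ?_)
  congr 1; funext s; rw [norm_mul, nexp, one_mul]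

lemma FT_int {φ : ℝ → ℂ} (h : Integrable φ) (y : ℝ) :
    Integrable (fun s : ℝ => Complex.exp (-(Complex.I * s * y)) * φ s) := by
  refine h.bdd_mul (c := 1) ?_ (Eventually.of_forall fun s => (nexp s y).le)
  exact (by fun_prop : Continuous fun s : ℝ => Complex.exp (-(Complex.I * s * y))).aestronglyMeasurable

lemma FT_cont {φ : ℝ → ℂ} (h : Integrable φ) : Continuous (FT φ) := by
  unfold FT
  refine continuous_of_dominated (bound := fun s => ‖φ s‖) (fun y => (FT_int h y).aestronglyMeasurable)
    (fun y => Eventually.of_forall fun s => ?_) h.norm (Eventually.of_forall fun s => by fun_prop)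
  rw [norm_mul, nexp, one_mul]

lemma FT_add {φ ψ : ℝ → ℂ} (h : Integrable φ) (h' : Integrable ψ) (y : ℝ) :
    FT (fun s => φ s + ψ s) y = FT φ y + FT ψ y := by
  unfold FT
  rw [← integral_add (FT_int h y) (FT_int h' y)]
  congr 1; funext s; ring

lemma FT_cmul (c : ℂ) (φ : ℝ → ℂ) (y : ℝ) :
    FT (fun s => c * φ s) y = c * FT φ y := by
  unfold FT
  rw [← integral_const_mul]
  congr 1; funext s; ring

lemma FT_deriv {φ φ' : ℝ → ℂ} (hd : ∀ s, HasDerivAt φ (φ' s) s) (h : Integrable φ)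
    (h' : Integrable φ') (y : ℝ) : FT φ' y = (Complex.I * y) * FT φ y := by
  unfold FT
  have hu : ∀ s : ℝ, HasDerivAt (fun s : ℝ => Complex.exp (-(Complex.I * s * y)))
      (-(Complex.I * y) * Complex.exp (-(Complex.I * s * y))) s := by
    intro s
    have : HasDerivAt (fun s : ℝ => -(Complex.I * (s : ℂ) * y)) (-(Complex.I * y)) s := by
      simpa using ((((hasDerivAt_id s).ofReal_comp).const_mul Complex.I).mul_const (y : ℂ)).fun_neg
    simpa [mul_comm] using this.cexp
  have := integral_mul_deriv_eq_deriv_mul_of_integrable (fun s _ => hu s) (fun s _ => hd s)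
    (FT_int h' y) ?_ (FT_int h y)
  · rw [this, ← integral_neg, ← integral_const_mul]
    congr 1; funext s; ring
  · have := (FT_int h y).const_mul (-(Complex.I * y))
    refine this.congr (Eventually.of_forall fun s => ?_)
    simp only [Pi.mul_apply]; ring

lemma FT_iter {φ : ℝ → ℂ} (hs : ContDiff ℝ (⊤ : ℕ∞) φ) (h : ∀ k, Integrable (iteratedDeriv k φ))
    (k : ℕ) (y : ℝ) : FT (iteratedDeriv k φ) y = (Complex.I * y) ^ k * FT φ y := by
  induction k with
  | zero => simp
  | succ k ih =>
    rw [FT_deriv (fun s => hd_iter hs k s) (h k) (h (k + 1)), ih]; ring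

lemma PG.FT_decay {N : ℤ} {w : κ → ℝ} {F : κ → ℝ → ℂ} (hF : PG N w F) (hN : N ≤ -2)
    (hw : ∀ i, 0 ≤ w i) (L : ℕ) :
    ∃ C : ℝ, 0 ≤ C ∧ ∀ i y, ‖FT (F i) y‖ ≤ C * w i * (1 + |y|) ^ (-(L : ℤ)) := by
  choose C hC h using (hF.monoN hN hw).2
  refine ⟨∑ k ∈ Finset.range (L + 1), C k * c0 * L.choose k,
    Finset.sum_nonneg fun k _ => by have := hC k; have := c0_nonneg; positivity, fun i y => ?_⟩
  rw [zpow_neg, zpow_natCast, ← div_eq_mul_inv, le_div_iff₀ (by have := jb_pos y; positivity),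
    add_comm 1 |y|, add_pow, Finset.mul_sum, Finset.sum_mul]
  refine Finset.sum_le_sum fun k _ => ?_
  have h1 := FT_iter (hF.1 i) (fun k => hF.integrable hN i (hw i) k) k y
  have h2 : ‖FT (iteratedDeriv k (F i)) y‖ ≤ C k * w i * c0 := by
    unfold FT
    refine norm_int_le _ fun s => ?_
    rw [norm_mul, nexp, one_mul]; exact h k i s
  rw [h1, norm_mul, norm_pow, norm_mul, Complex.norm_I, one_mul, Complex.norm_real,
    Real.norm_eq_abs] at h2
  calc _ = (|y| ^ k * ‖FT (F i) y‖) * (L.choose k : ℝ) := by simp; ring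
    _ ≤ (C k * w i * c0) * (L.choose k : ℝ) := by gcongr
    _ = _ := by ring

/-! ### The regularised pairing -/

def TT (K : ℕ) (G : ℝ → ℂ) (y : ℝ) : ℂ :=
  ∑ k ∈ Finset.range (K + 1), (K.choose k : ℂ) * iteratedDeriv k G y

/-- The pairing `(2π)⁻¹ ∬ e^{-iyσ} F(σ) G(y) dy dσ`, regularised. -/
def BB (K : ℕ) (F G : ℝ → ℂ) : ℂ :=
  (2 * Real.pi : ℂ)⁻¹ * ∫ y : ℝ, FT (fun σ => F σ * W K σ) y * TT K G y

lemma TT_cont (K : ℕ) {G : ℝ → ℂ} (h : ContDiff ℝ (⊤ : ℕ∞) G) : Continuous (TT K G) := by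
  unfold TT
  exact continuous_finsetSum _ fun k _ => continuous_const.mul (cont_iter h k)

lemma PG.TT_bd {N : ℤ} {w : κ → ℝ} {G : κ → ℝ → ℂ} (hG : PG N w G) (K : ℕ) :
    ∃ C : ℝ, 0 ≤ C ∧ ∀ i y, ‖TT K (G i) y‖ ≤ C * w i * (1 + |y|) ^ N := by
  choose C hC h using hG.2
  refine ⟨∑ k ∈ Finset.range (K + 1), K.choose k * C k,
    Finset.sum_nonneg fun k _ => by have := hC k; positivity, fun i y => ?_⟩
  unfold TT
  rw [Finset.sum_mul, Finset.sum_mul]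
  refine (norm_sum_le _ _).trans (Finset.sum_le_sum fun k _ => ?_)
  rw [norm_mul, Complex.norm_natCast, mul_assoc, mul_assoc, ← mul_assoc (C k)]
  exact mul_le_mul_of_nonneg_left (h k i y) (by positivity)

lemma TT_add (K : ℕ) {G H : ℝ → ℂ} (hG : ContDiff ℝ (⊤ : ℕ∞) G) (hH : ContDiff ℝ (⊤ : ℕ∞) H)
    (y : ℝ) : TT K (fun y => G y + H y) y = TT K G y + TT K H y := by
  unfold TT
  rw [← Finset.sum_add_distrib]
  refine Finset.sum_congr rfl fun k _ => ?_
  rw [iteratedDeriv_fun_add (cda hG k y) (cda hH k y)]; ring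

lemma TT_cmul (K : ℕ) (c : ℂ) (G : ℝ → ℂ) (y : ℝ) :
    TT K (fun y => c * G y) y = c * TT K G y := by
  unfold TT
  rw [Finset.mul_sum]
  refine Finset.sum_congr rfl fun k _ => ?_
  rw [iteratedDeriv_const_mul_field]; ring

lemma PG.FW {N : ℤ} {w : κ → ℝ} {F : κ → ℝ → ℂ} (hF : PG N w F) (K : ℕ) (hK : N + 2 ≤ K)
    (hw : ∀ i, 0 ≤ w i) : PG (-2) w (fun i σ => F i σ * _root_.W K σ) := by
  have := (hF.mul (PG.W (κ := κ) K) hw).monoN (N' := -2) (by omega) (by simpa using hw)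
  simpa using this

lemma PG.BB_integrand {N N' : ℤ} {w w' : κ → ℝ} {F G : κ → ℝ → ℂ} (hF : PG N w F)
    (hG : PG N' w' G) (K : ℕ) (hK : N + 2 ≤ K) (hw : ∀ i, 0 ≤ w i) :
    ∃ C : ℝ, 0 ≤ C ∧ ∀ i y, ‖FT (fun σ => F i σ * _root_.W K σ) y * TT K (G i) y‖
      ≤ (C * w i * w' i) * (1 + |y|) ^ (-2 : ℤ) := by
  obtain ⟨D, hD, h2⟩ := hG.TT_bd K
  obtain ⟨C, hC, h1⟩ := (hF.FW K hK hw).FT_decay le_rfl hw (N' + 2).toNat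
  refine ⟨C * D, by positivity, fun i y => ?_⟩
  rw [norm_mul]
  have hz : (1 + |y|) ^ (-((N' + 2).toNat : ℤ)) * (1 + |y|) ^ N' ≤ (1 + |y|) ^ (-2 : ℤ) := by
    rw [← zpow_add₀ (jb_pos y).ne']
    exact zpow_le_zpow_right₀ (one_le_jb y) (by omega)
  have hw' : 0 ≤ D * w' i := by
    have := (norm_nonneg _).trans (h2 i y)
    by_contra hcon
    push Not at hcon
    have := mul_neg_of_neg_of_pos hcon (zpow_pos (jb_pos y) N')
    linarith
  calc _ ≤ (C * w i * (1 + |y|) ^ (-((N' + 2).toNat : ℤ))) * (D * w' i * (1 + |y|) ^ N') :=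
        mul_le_mul (h1 i y) (h2 i y) (norm_nonneg _)
          (mul_nonneg (mul_nonneg hC (hw i)) (zpow_nonneg (jb_pos y).le _))
    _ = (C * w i) * (D * w' i) * ((1 + |y|) ^ (-((N' + 2).toNat : ℤ)) * (1 + |y|) ^ N') := by ring
    _ ≤ (C * w i) * (D * w' i) * (1 + |y|) ^ (-2 : ℤ) :=
        mul_le_mul_of_nonneg_left hz (mul_nonneg (mul_nonneg hC (hw i)) hw')
    _ = _ := by ring

lemma PG.FW_int {N : ℤ} {w : κ → ℝ} {F : κ → ℝ → ℂ} (hF : PG N w F) (K : ℕ) (hK : N + 2 ≤ K)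
    (hw : ∀ i, 0 ≤ w i) (i : κ) : Integrable (fun σ => F i σ * _root_.W K σ) := by
  simpa using (hF.FW K hK hw).integrable le_rfl i (hw i) 0

lemma PG.BB_int {N N' : ℤ} {w w' : κ → ℝ} {F G : κ → ℝ → ℂ} (hF : PG N w F)
    (hG : PG N' w' G) (K : ℕ) (hK : N + 2 ≤ K) (hw : ∀ i, 0 ≤ w i) (i : κ) :
    Integrable (fun y => FT (fun σ => F i σ * _root_.W K σ) y * TT K (G i) y) := by
  obtain ⟨C, hC, h⟩ := hF.BB_integrand hG K hK hw
  exact int_of_bd ((FT_cont (hF.FW_int K hK hw i)).mul (TT_cont K (hG.1 i))) _ (h i)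

lemma PG.BB_bd {N N' : ℤ} {w w' : κ → ℝ} {F G : κ → ℝ → ℂ} (hF : PG N w F)
    (hG : PG N' w' G) (K : ℕ) (hK : N + 2 ≤ K) (hw : ∀ i, 0 ≤ w i) :
    ∃ C : ℝ, 0 ≤ C ∧ ∀ i, ‖BB K (F i) (G i)‖ ≤ C * (w i * w' i) := by
  obtain ⟨C, hC, h⟩ := hF.BB_integrand hG K hK hw
  refine ⟨‖(2 * Real.pi : ℂ)⁻¹‖ * C * c0, by have := c0_nonneg; positivity, fun i => ?_⟩
  unfold BB
  rw [norm_mul]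
  calc _ ≤ ‖(2 * Real.pi : ℂ)⁻¹‖ * ((C * w i * w' i) * c0) :=
        mul_le_mul_of_nonneg_left (norm_int_le _ (h i)) (norm_nonneg _)
    _ = _ := by ring

end PG

/-- Polynomial growth of a single function. -/
abbrev P1 (N : ℤ) (F : ℝ → ℂ) : Prop := PG (κ := Unit) N (fun _ => 1) (fun _ => F)

lemma PG.single {κ : Type} {N : ℤ} {w : κ → ℝ} {F : κ → ℝ → ℂ} (h : PG N w F) (i : κ) :
    P1 N (F i) := by
  refine ⟨fun _ => h.1 i, fun k => ?_⟩
  obtain ⟨C, hC, h⟩ := h.2 k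
  refine ⟨C * |w i|, by positivity, fun _ y => (h i y).trans ?_⟩
  have := zpow_pos (jb_pos y) N
  refine mul_le_mul_of_nonneg_right ?_ this.le
  rw [mul_one]
  exact mul_le_mul_of_nonneg_left (le_abs_self _) hC

lemma BB_add_left {N N' : ℤ} {F F' G : ℝ → ℂ} (hF : P1 N F) (hF' : P1 N F') (hG : P1 N' G)
    {K : ℕ} (hK : N + 2 ≤ K) : BB K (fun σ => F σ + F' σ) G = BB K F G + BB K F' G := by
  unfold BB
  rw [← mul_add, ← integral_add (hF.BB_int hG K hK (by simp) ()) (hF'.BB_int hG K hK (by simp) ())]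
  congr 2
  funext y
  rw [← add_mul, ← FT_add (hF.FW_int K hK (by simp) ()) (hF'.FW_int K hK (by simp) ())]
  simp_rw [add_mul]

lemma BB_add_right {N N' : ℤ} {F G G' : ℝ → ℂ} (hF : P1 N F) (hG : P1 N' G) (hG' : P1 N' G')
    {K : ℕ} (hK : N + 2 ≤ K) : BB K F (fun σ => G σ + G' σ) = BB K F G + BB K F G' := by
  unfold BB
  rw [← mul_add, ← integral_add (hF.BB_int hG K hK (by simp) ()) (hF.BB_int hG' K hK (by simp) ())]
  congr 2
  funext y
  rw [← mul_add, TT_add K (hG.1 ()) (hG'.1 ())]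

lemma BB_cmul_left (c : ℂ) (F G : ℝ → ℂ) (K : ℕ) :
    BB K (fun σ => c * F σ) G = c * BB K F G := by
  unfold BB
  simp_rw [mul_assoc, FT_cmul, mul_assoc]
  rw [integral_const_mul]; ring

lemma BB_cmul_right (c : ℂ) (F G : ℝ → ℂ) (K : ℕ) :
    BB K F (fun σ => c * G σ) = c * BB K F G := by
  unfold BB
  simp_rw [TT_cmul, mul_left_comm _ c]
  rw [integral_const_mul]; ring

/-! ### Agreement with the absolutely convergent pairing, approximation -/

def Sw (v : ℝ → ℂ) : Prop := ∀ L : ℕ, P1 (-(L : ℤ)) v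

lemma Sw.cd {v : ℝ → ℂ} (h : Sw v) : ContDiff ℝ (⊤ : ℕ∞) v := (h 0).1 ()

lemma Sw.int {v : ℝ → ℂ} (h : Sw v) (k : ℕ) : Integrable (iteratedDeriv k v) :=
  (h 2).integrable (by norm_num) () (by norm_num) k

lemma Sw.int0 {v : ℝ → ℂ} (h : Sw v) : Integrable v := by simpa using h.int 0

lemma Sw.deriv {v : ℝ → ℂ} (h : Sw v) : Sw (deriv v) := fun L => (h L).deriv

lemma FT_swap {φ ψ : ℝ → ℂ} (hφ : Integrable φ) (hψ : Integrable ψ) :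
    ∫ y, FT φ y * ψ y = ∫ s, φ s * FT ψ s := by
  unfold FT
  simp_rw [← integral_mul_const, ← integral_const_mul]
  rw [integral_integral_swap]
  · congr 1; funext s; congr 1; funext y
    rw [show -(Complex.I * (y : ℂ) * s) = -(Complex.I * (s : ℂ) * y) by ring]; ring
  · have h := hψ.mul_prod hφ
    have h2 := h.bdd_mul (c := 1) (f := fun p : ℝ × ℝ => Complex.exp (-(Complex.I * p.2 * p.1)))
      (by fun_prop : Continuous fun p : ℝ × ℝ =>
        Complex.exp (-(Complex.I * p.2 * p.1))).aestronglyMeasurable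
      (Eventually.of_forall fun p => (nexp p.2 p.1).le)
    refine h2.congr (Eventually.of_forall fun p => ?_)
    simp only [Function.uncurry]; ring

lemma FT_TT {G : ℝ → ℂ} (hG : Sw G) (K : ℕ) (s : ℝ) :
    FT (TT K G) s = (1 + Complex.I * s) ^ K * FT G s := by
  have : FT (TT K G) s = ∑ k ∈ Finset.range (K + 1), (K.choose k : ℂ) * FT (iteratedDeriv k G) s := by
    unfold TT
    rw [show (∑ k ∈ Finset.range (K + 1), (K.choose k : ℂ) * FT (iteratedDeriv k G) s)
      = ∑ k ∈ Finset.range (K + 1), FT (fun y => (K.choose k : ℂ) * iteratedDeriv k G y) s from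
      Finset.sum_congr rfl fun k _ => (FT_cmul _ _ _).symm]
    unfold FT
    rw [← integral_finsetSum _ fun k _ => FT_int ((hG.int k).const_mul _) s]
    congr 1; funext y; rw [Finset.mul_sum]
  rw [this, add_comm (1 : ℂ), add_pow, Finset.sum_mul]
  refine Finset.sum_congr rfl fun k _ => ?_
  rw [FT_iter hG.cd hG.int]; simp; ring

lemma TT_int {G : ℝ → ℂ} (hG : Sw G) (K : ℕ) : Integrable (TT K G) := by
  unfold TT
  exact integrable_finsetSum _ fun k _ => (hG.int k).const_mul _

lemma BB_agree {N : ℤ} {F G : ℝ → ℂ} (hF : P1 N F) (hG : Sw G) {K : ℕ} (hK : N + 2 ≤ K) :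
    BB K F G = (2 * Real.pi : ℂ)⁻¹ * ∫ s, F s * FT G s := by
  unfold BB
  rw [FT_swap (hF.FW_int K hK (by simp) ()) (TT_int hG K)]
  congr 2; funext s
  rw [FT_TT hG, W]
  have := pow_ne_zero K (one_add_ne s)
  field_simp

lemma compact_Sw {G : ℝ → ℂ} (hG : ContDiff ℝ (⊤ : ℕ∞) G) (hc : HasCompactSupport G) : Sw G := by
  intro L
  refine ⟨fun _ => hG, fun k => ?_⟩
  have hck : HasCompactSupport (iteratedDeriv k G) := by
    induction k with
    | zero => simpa using hc
    | succ k ih => rw [iteratedDeriv_succ]; exact ih.deriv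
  have hcont : Continuous fun y : ℝ => iteratedDeriv k G y * ((1 + |y| : ℝ) : ℂ) ^ L :=
    (cont_iter hG k).mul (by fun_prop)
  obtain ⟨C, hC⟩ := hcont.bounded_above_of_compact_support hck.mul_right
  refine ⟨C, (norm_nonneg _).trans (hC 0), fun _ y => ?_⟩
  have := hC y
  rw [norm_mul, norm_pow, Complex.norm_real, Real.norm_of_nonneg (jb_pos y).le] at this
  rw [mul_one, zpow_neg, zpow_natCast, ← div_eq_mul_inv, le_div_iff₀ (pow_pos (jb_pos y) L)]
  exact this

/-- cutoffs -/
lemma exists_cutoff : ∃ χ : ℕ → ℝ → ℂ, PG 0 (fun _ => 1) χ ∧ (∀ n, HasCompactSupport (χ n)) ∧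
    ∀ y, ∀ᶠ n in atTop, χ n =ᶠ[𝓝 y] fun _ => 1 := by
  let b : ContDiffBump (0 : ℝ) := ⟨1, 2, by norm_num, by norm_num⟩
  have hbc : ContDiff ℝ (⊤ : ℕ∞) fun y => (b y : ℂ) := Complex.ofRealCLM.contDiff.comp b.contDiff
  have hbs : HasCompactSupport fun y => (b y : ℂ) :=
    b.hasCompactSupport.comp_left (g := fun t : ℝ => (t : ℂ)) (by simp)
  refine ⟨fun n y => (b ((n + 1 : ℝ)⁻¹ * y) : ℂ), ⟨fun n => ?_, fun k => ?_⟩, fun n => ?_, fun y => ?_⟩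
  · exact hbc.comp (contDiff_const.mul contDiff_id)
  · obtain ⟨C, hC, h⟩ := (compact_Sw hbc hbs 0).2 k
    refine ⟨C, hC, fun n y => ?_⟩
    have := congrFun (iteratedDeriv_comp_const_smul (n := k) (hbc.of_le (by exact_mod_cast le_top)) (n + 1 : ℝ)⁻¹) y
    rw [this, norm_smul]
    have h1 := h () ((n + 1 : ℝ)⁻¹ * y)
    simp only [Nat.cast_zero, neg_zero, zpow_zero, mul_one] at h1 ⊢
    have h2 : ‖(n + 1 : ℝ)⁻¹ ^ k‖ ≤ 1 := by
      rw [norm_pow]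
      refine pow_le_one₀ (norm_nonneg _) ?_
      rw [Real.norm_of_nonneg (by positivity)]
      exact inv_le_one_of_one_le₀ (by linarith [(Nat.cast_nonneg n : (0 : ℝ) ≤ n)])
    exact (mul_le_mul h2 h1 (norm_nonneg _) zero_le_one).trans (by rw [one_mul])
  · have : (n + 1 : ℝ)⁻¹ ≠ 0 := by positivity
    exact hbs.comp_homeomorph (Homeomorph.mulLeft₀ _ this)
  · obtain ⟨M, hM⟩ := exists_nat_gt (|y| + 1)
    filter_upwards [eventually_ge_atTop M] with n hn
    filter_upwards [Metric.ball_mem_nhds y one_pos] with z hz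
    have hb : b ((n + 1 : ℝ)⁻¹ * z) = 1 := by
      apply b.one_of_mem_closedBall
      simp only [Metric.mem_closedBall, dist_zero_right, norm_mul, b]
      rw [Real.norm_of_nonneg (by positivity), inv_mul_le_iff₀ (by positivity)]
      rw [Metric.mem_ball, Real.dist_eq] at hz
      have : (M : ℝ) ≤ n := by exact_mod_cast hn
      have := abs_sub_abs_le_abs_sub z y
      rw [Real.norm_eq_abs]; linarith
    simp [hb]

lemma exists_approx {N' : ℤ} {G : ℝ → ℂ} (hG : P1 N' G) : ∃ Gn : ℕ → ℝ → ℂ,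
    PG N' (fun _ => 1) Gn ∧ (∀ n, Sw (Gn n)) ∧ ∀ y, ∀ᶠ n in atTop, Gn n =ᶠ[𝓝 y] G := by
  obtain ⟨χ, h1, h2, h3⟩ := exists_cutoff
  refine ⟨fun n y => χ n y * G y, ?_, fun n => ?_, fun y => ?_⟩
  · simpa using h1.mul (hG.reindex fun _ : ℕ => ()) (by simp)
  · exact compact_Sw ((h1.1 n).mul (hG.1 ())) (h2 n).mul_right
  · filter_upwards [h3 y] with n hn
    filter_upwards [hn] with z hz
    simp [hz]

lemma BB_conv {N N' : ℤ} {F G : ℝ → ℂ} {Gn : ℕ → ℝ → ℂ} (hF : P1 N F)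
    (hG : PG N' (fun _ => 1) Gn) (hl : ∀ y, ∀ᶠ n in atTop, Gn n =ᶠ[𝓝 y] G) {K : ℕ} (hK : N + 2 ≤ K) :
    Tendsto (fun n => BB K F (Gn n)) atTop (𝓝 (BB K F G)) := by
  unfold BB
  refine Tendsto.const_mul _ ?_
  have hF' := hF.reindex fun _ : ℕ => ()
  obtain ⟨C, hC, h⟩ := hF'.BB_integrand hG K hK (by simp)
  refine tendsto_integral_of_dominated_convergence (fun y => C * (1 + |y|) ^ (-2 : ℤ))
    (fun n => (hF'.BB_int hG K hK (by simp) n).aestronglyMeasurable) (int_jb.const_mul C)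
    (fun n => Eventually.of_forall fun y => by simpa using h n y)
    (Eventually.of_forall fun y => ?_)
  refine Tendsto.congr' ?_ tendsto_const_nhds
  filter_upwards [hl y] with n hn
  have : TT K (Gn n) y = TT K G y := by
    unfold TT
    exact Finset.sum_congr rfl fun k _ => by rw [(hn.iteratedDeriv k).eq_of_nhds]
  rw [this]

lemma P1.expo (ξ : ℝ) : P1 0 (fun y : ℝ => Complex.exp (Complex.I * ξ * y)) := by
  have hd : ∀ k : ℕ, iteratedDeriv k (fun y : ℝ => Complex.exp (Complex.I * ξ * y))
      = fun y : ℝ => (Complex.I * ξ) ^ k * Complex.exp (Complex.I * ξ * y) := by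
    intro k
    induction k with
    | zero => simp
    | succ k ih =>
      rw [iteratedDeriv_succ, ih]
      funext y
      have : HasDerivAt (fun y : ℝ => Complex.I * ξ * (y : ℂ)) (Complex.I * ξ) y := by
        simpa using ((hasDerivAt_id y).ofReal_comp).const_mul (Complex.I * ξ)
      rw [(this.cexp.const_mul ((Complex.I * ξ) ^ k)).deriv]; ring
  refine ⟨fun _ => ?_, fun k => ⟨‖(Complex.I * (ξ : ℂ)) ^ k‖, norm_nonneg _, fun _ y => ?_⟩⟩
  · exact (contDiff_const.mul Complex.ofRealCLM.contDiff).cexp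
  · rw [hd, norm_mul]
    have := nexp (-ξ) y
    simp only [Complex.ofReal_neg, mul_neg, neg_mul, neg_neg] at this
    simp [this]

lemma Sw.mulP {N : ℤ} {F v : ℝ → ℂ} (hF : P1 N F) (h : Sw v) : Sw (fun y => F y * v y) := by
  intro L
  have := (hF.mul (h (L + N.toNat)) (by simp)).monoN (N' := -(L : ℤ)) (by
    push_cast; have := Int.self_le_toNat N; omega) (by simp)
  simpa using this

lemma FT_expo (v : ℝ → ℂ) (ξ s : ℝ) :
    FT (fun y => Complex.exp (Complex.I * ξ * y) * v y) s = FT v (s - ξ) := by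
  unfold FT
  congr 1; funext y
  rw [← mul_assoc, ← Complex.exp_add]
  congr 2; push_cast; ring

lemma P1.shift {N : ℤ} {F : ℝ → ℂ} (hF : P1 N F) (ξ : ℝ) : P1 N (fun s => F (s + ξ)) := by
  refine ⟨fun _ => (hF.1 ()).comp (contDiff_id.add contDiff_const), fun k => ?_⟩
  obtain ⟨C, hC, h⟩ := hF.2 k
  refine ⟨C * (1 + |ξ|) ^ N.natAbs, by positivity, fun _ y => ?_⟩
  rw [iteratedDeriv_comp_add_const]
  refine (h () _).trans ?_
  rw [mul_one, mul_one, mul_assoc]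
  refine mul_le_mul_of_nonneg_left ?_ hC
  have key : ∀ a b : ℝ, 1 + |a + b| ≤ (1 + |b|) * (1 + |a|) := fun a b => by
    have := abs_add_le a b
    nlinarith [abs_nonneg a, abs_nonneg b]
  rcases le_total 0 N with hN | hN
  · lift N to ℕ using hN
    simp only [zpow_natCast, Int.natAbs_natCast]
    rw [← mul_pow]
    exact pow_le_pow_left₀ (jb_pos _).le (key y ξ) N
  · obtain ⟨M, rfl⟩ : ∃ M : ℕ, N = -(M : ℤ) := ⟨N.natAbs, by omega⟩
    simp only [zpow_neg, zpow_natCast, Int.natAbs_neg, Int.natAbs_natCast]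
    rw [← div_eq_mul_inv, le_div_iff₀ (pow_pos (jb_pos y) M), inv_mul_le_iff₀ (pow_pos (jb_pos _) M),
      ← mul_pow]
    refine pow_le_pow_left₀ (jb_pos _).le ?_ M
    have := key (y + ξ) (-ξ)
    simp only [add_neg_cancel_right, abs_neg] at this
    linarith [mul_comm (1 + |ξ|) (1 + |y + ξ|)]

/-- (iii) -/
lemma BB_shift {N N' : ℤ} {F G : ℝ → ℂ} (hF : P1 N F) (hG : P1 N' G) {K : ℕ} (hK : N + 2 ≤ K)
    (ξ : ℝ) : BB K F (fun y => Complex.exp (Complex.I * ξ * y) * G y) = BB K (fun s => F (s + ξ)) G := by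
  obtain ⟨Gn, h1, h2, h3⟩ := exists_approx hG
  have c1 : Tendsto (fun n => BB K F (fun y => Complex.exp (Complex.I * ξ * y) * Gn n y)) atTop
      (𝓝 (BB K F (fun y => Complex.exp (Complex.I * ξ * y) * G y))) := by
    refine BB_conv hF (N' := 0 + N') (by simpa using ((P1.expo ξ).reindex fun _ : ℕ => ()).mul h1 (by simp)) (fun y => ?_) hK
    filter_upwards [h3 y] with n hn
    filter_upwards [hn] with z hz
    rw [hz]
  refine tendsto_nhds_unique c1 ((BB_conv (hF.shift ξ) h1 h3 hK).congr fun n => ?_)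
  rw [BB_agree (hF.shift ξ) (h2 n) hK, BB_agree hF (Sw.mulP (P1.expo ξ) (h2 n)) hK]
  congr 1
  rw [← integral_add_right_eq_self (fun s => F s * FT _ s) ξ]
  congr 1; funext s
  rw [FT_expo, add_sub_cancel_right]

/-- (ii) -/
lemma BB_parts {N N' : ℤ} {F G : ℝ → ℂ} (hF : P1 N F) (hG : P1 N' G) {K : ℕ} (hK : N + 3 ≤ K) :
    BB K (fun s => (Complex.I * s) * F s) G = BB K F (deriv G) := by
  obtain ⟨Gn, h1, h2, h3⟩ := exists_approx hG
  have hF' : P1 (1 + N) (fun s => (Complex.I * s) * F s) := by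
    have := ((PG.id (κ := Unit)).cmul fun _ => Complex.I).mul hF (by simp)
    simpa using this
  have c1 : Tendsto (fun n => BB K F (deriv (Gn n))) atTop (𝓝 (BB K F (deriv G))) := by
    refine BB_conv hF h1.deriv (fun y => ?_) (by omega)
    filter_upwards [h3 y] with n hn
    exact hn.deriv
  refine tendsto_nhds_unique (BB_conv hF' h1 h3 (by omega)) (c1.congr fun n => ?_)
  rw [BB_agree hF' (h2 n) (by omega), BB_agree hF (h2 n).deriv (by omega)]
  congr 2; funext s
  have := FT_iter (h2 n).cd (h2 n).int 1 s
  rw [iteratedDeriv_one] at this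
  rw [this]; ring

lemma FT_fourier (v : ℝ → ℂ) (s : ℝ) : FT v s = FourierTransform.fourier v (s / (2 * Real.pi)) := by
  rw [Real.fourier_real_eq_integral_exp_smul]
  unfold FT
  congr 1; funext y
  rw [smul_eq_mul]
  congr 2
  have : (Real.pi : ℂ) ≠ 0 := by exact_mod_cast Real.pi_ne_zero
  push_cast; field_simp

lemma FT_inv {v : ℝ → ℂ} (h : Sw v) (x : ℝ) :
    (2 * Real.pi : ℂ)⁻¹ * ∫ s : ℝ, Complex.exp (Complex.I * x * s) * FT v s = v x := by
  have hFT : Integrable (FT v) := by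
    obtain ⟨C, hC, hd⟩ := (h 2).FT_decay (by norm_num) (by simp) 2
    exact int_of_bd (FT_cont h.int0) C fun y => by simpa using hd () y
  have h2 : Integrable (FourierTransform.fourier v) := by
    have := hFT.comp_mul_right' (R := 2 * Real.pi) (by positivity)
    refine this.congr (Eventually.of_forall fun s => ?_)
    simp only [FT_fourier]
    congr 1
    have := Real.pi_ne_zero
    field_simp
  have h3 := h.cd.continuous.fourierInv_fourier_eq h.int0 h2
  have h4 := congrFun h3 x
  rw [Real.fourierInv_eq'] at h4
  rw [← h4]
  have h5 := Measure.integral_comp_div (fun s : ℝ =>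
    Complex.exp (((2 * Real.pi * (inner ℝ s x) : ℝ) : ℂ) * Complex.I) • FourierTransform.fourier v s)
    (2 * Real.pi)
  have hp : (Real.pi : ℂ) ≠ 0 := by exact_mod_cast Real.pi_ne_zero
  have h6 : (∫ s : ℝ, Complex.exp (Complex.I * x * s) * FT v s) = (2 * Real.pi : ℂ) *
    ∫ s : ℝ, Complex.exp (((2 * Real.pi * (inner ℝ s x) : ℝ) : ℂ) * Complex.I) •
      FourierTransform.fourier v s := by
    rw [abs_of_nonneg (by positivity)] at h5
    rw [Complex.real_smul] at h5
    push_cast at h5 ⊢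
    rw [← h5]
    congr 1; funext s
    rw [FT_fourier, smul_eq_mul]
    congr 2
    rw [show (inner ℝ (s / (2 * Real.pi)) x : ℝ) = x * (s / (2 * Real.pi)) by simp]
    push_cast
    field_simp
  rw [h6, ← mul_assoc, inv_mul_cancel₀ (by simpa using hp), one_mul]

/-- (i) -/
lemma BB_const {N' : ℤ} {G : ℝ → ℂ} (c : ℂ) (hG : P1 N' G) {K : ℕ} (hK : 2 ≤ K) :
    BB K (fun _ => c) G = c * G 0 := by
  obtain ⟨Gn, h1, h2, h3⟩ := exists_approx hG
  have hF : P1 0 (fun _ => c) := (PG.const (κ := Unit) fun _ => c).single ()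
  refine tendsto_nhds_unique (BB_conv hF h1 h3 (by omega)) ?_
  refine Tendsto.congr' ?_ (tendsto_const_nhds (x := c * G 0))
  filter_upwards [h3 0] with n hn
  rw [BB_agree hF (h2 n) (by omega), ← hn.eq_of_nhds, ← FT_inv (h2 n) 0, integral_const_mul]
  simp; ring

/-! ### Differentiation of the pairing with respect to a parameter -/

abbrev JJ (s0 : ℝ) : Type := {s : ℝ // |s - s0| ≤ 1}

lemma it_sub {F G : ℝ → ℂ} (hF : ContDiff ℝ (⊤ : ℕ∞) F) (hG : ContDiff ℝ (⊤ : ℕ∞) G) (k : ℕ) (y : ℝ) :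
    iteratedDeriv k (fun y => F y - G y) y = iteratedDeriv k F y - iteratedDeriv k G y := by
  exact iteratedDeriv_sub (cda hF k y) (cda hG k y)

lemma MV {H : ℝ → ℝ → ℂ} (hH : Sm2 H) {s0 : ℝ} {N : ℤ} {p : ℕ}
    (h : PG N (fun s : JJ s0 => |s.1 - s0| ^ p) (fun s => Dx H s.1)) :
    PG N (fun s : JJ s0 => |s.1 - s0| ^ (p + 1)) (fun s σ => H s.1 σ - H s0 σ) := by
  refine ⟨fun s => (hH.seck s.1).sub (hH.seck s0), fun k => ?_⟩
  obtain ⟨C, hC, hb⟩ := h.2 k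
  refine ⟨C, hC, fun s σ => ?_⟩
  rw [it_sub (hH.seck s.1) (hH.seck s0), ← iter_Dk, ← iter_Dk]
  have hd : ∀ t, HasDerivAt (fun t => (Dk^[k] H) t σ) ((Dk^[k] (Dx H)) t σ) t := fun t => by
    rw [← hH.comm_itk]; exact (hH.itk k).hx t σ
  have hz := zpow_pos (jb_pos σ) N
  have := (convex_closedBall s0 |s.1 - s0|).norm_image_sub_le_of_norm_hasDerivWithin_le
    (f := fun t => (Dk^[k] H) t σ) (f' := fun t => (Dk^[k] (Dx H)) t σ)
    (C := C * |s.1 - s0| ^ p * (1 + |σ|) ^ N) (x := s0) (y := s.1)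
    (fun t _ => (hd t).hasDerivWithinAt) (fun t ht => ?_)
    (Metric.mem_closedBall_self (abs_nonneg _)) (by simp [Real.dist_eq])
  · refine this.trans (le_of_eq ?_)
    rw [Real.norm_eq_abs]; ring
  · rw [Metric.mem_closedBall, Real.dist_eq] at ht
    rw [iter_Dk]
    refine (hb ⟨t, ht.trans s.2⟩ σ).trans ?_
    have : |t - s0| ^ p ≤ |s.1 - s0| ^ p := pow_le_pow_left₀ (abs_nonneg _) ht p
    simp only
    gcongr

lemma MV2 {H : ℝ → ℝ → ℂ} (hH : Sm2 H) {s0 : ℝ} {N : ℤ}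
    (h : PG N (fun _ : JJ s0 => 1) (fun s => Dx (Dx H) s.1)) :
    PG N (fun s : JJ s0 => |s.1 - s0| ^ 2)
      (fun s σ => H s.1 σ - H s0 σ - ((s.1 - s0 : ℝ) : ℂ) * Dx H s0 σ) := by
  have h1 : PG N (fun s : JJ s0 => |s.1 - s0| ^ 1) (fun s σ => Dx H s.1 σ - Dx H s0 σ) :=
    MV (p := 0) hH.dx (by simpa using h)
  have hL : Sm2 fun s σ => -(((s - s0 : ℝ) : ℂ) * Dx H s0 σ) := by
    have : ContDiff ℝ (⊤ : ℕ∞) (fun q : ℝ × ℝ => Dx H s0 q.2) := (hH.dx.seck s0).comp contDiff_snd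
    exact ((Complex.ofRealCLM.contDiff.comp (contDiff_fst.sub contDiff_const)).mul this).neg
  have h2 : Dx (fun s σ => H s σ + -(((s - s0 : ℝ) : ℂ) * Dx H s0 σ)) = fun s σ => Dx H s σ - Dx H s0 σ := by
    rw [Dx_add hH hL]
    funext s σ
    have : HasDerivAt (fun s : ℝ => -(((s - s0 : ℝ) : ℂ) * Dx H s0 σ)) (-(Dx H s0 σ)) s := by
      simpa using (((((hasDerivAt_id s).sub_const s0)).ofReal_comp).mul_const (Dx H s0 σ)).fun_neg
    rw [show Dx (fun s σ => -(((s - s0 : ℝ) : ℂ) * Dx H s0 σ)) s σ = -(Dx H s0 σ) from this.deriv]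
    ring
  have h3 := MV (p := 1) (hH.add hL) (s0 := s0) (N := N) (by rw [h2]; exact h1)
  convert h3 using 3
  simp; ring

lemma BB_hasDeriv {F G : ℝ → ℝ → ℂ} (hF : Sm2 F) (hG : Sm2 G) {s0 : ℝ} {N N' : ℤ} {K : ℕ}
    (hK : N + 2 ≤ K)
    (F0 : PG N (fun _ : JJ s0 => 1) (fun s => F s.1))
    (F1 : PG N (fun _ : JJ s0 => 1) (fun s => Dx F s.1))
    (F2 : PG N (fun _ : JJ s0 => 1) (fun s => Dx (Dx F) s.1))
    (G0 : PG N' (fun _ : JJ s0 => 1) (fun s => G s.1))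
    (G1 : PG N' (fun _ : JJ s0 => 1) (fun s => Dx G s.1))
    (G2 : PG N' (fun _ : JJ s0 => 1) (fun s => Dx (Dx G) s.1)) :
    HasDerivAt (fun s => BB K (F s) (G s)) (BB K (Dx F s0) (G s0) + BB K (F s0) (Dx G s0)) s0 := by
  let o : JJ s0 := ⟨s0, by simp⟩
  have E1 := MV2 hF F2
  have E2 := MV2 hG G2
  have E3 := MV (p := 0) hG (by simpa using G1)
  obtain ⟨A, hA, bA⟩ := E1.BB_bd G0 K hK (fun _ => by positivity)
  obtain ⟨B, hB, bB⟩ := (F1.reindex fun _ : JJ s0 => o).BB_bd E3 K hK (fun _ => by positivity)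
  obtain ⟨D, hD, bD⟩ := (F0.reindex fun _ : JJ s0 => o).BB_bd E2 K hK (fun _ => by positivity)
  simp only [o, mul_one, one_mul, zero_add, pow_one] at bA bB bD
  have main : ∀ s : JJ s0, ‖BB K (F s.1) (G s.1) - BB K (F s0) (G s0)
      - (s.1 - s0) • (BB K (Dx F s0) (G s0) + BB K (F s0) (Dx G s0))‖ ≤ (A + B + D) * ‖(s.1 - s0) ^ 2‖ := by
    intro s
    have i1 : BB K (F s.1) (G s.1) = BB K (fun σ => F s.1 σ - F s0 σ - ((s.1 - s0 : ℝ) : ℂ) * Dx F s0 σ) (G s.1)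
        + BB K (F s0) (G s.1) + ((s.1 - s0 : ℝ) : ℂ) * BB K (Dx F s0) (G s.1) := by
      have hs1 : P1 N (fun σ => F s.1 σ - F s0 σ - ((s.1 - s0 : ℝ) : ℂ) * Dx F s0 σ) := E1.single s
      have hs2 : P1 N (F s0) := F0.single o
      have hs3 : P1 N (fun σ => ((s.1 - s0 : ℝ) : ℂ) * Dx F s0 σ) :=
        ((F1.reindex fun _ : Unit => o).cmul fun _ => ((s.1 - s0 : ℝ) : ℂ)).single ()
      have hg : P1 N' (G s.1) := G0.single s
      rw [← BB_cmul_left, ← BB_add_left hs1 hs2 hg hK, ← BB_add_left (hs1.add hs2) hs3 hg hK]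
      congr 1; funext σ; ring
    have i2 : BB K (F s0) (G s.1) = BB K (F s0) (fun σ => G s.1 σ - G s0 σ - ((s.1 - s0 : ℝ) : ℂ) * Dx G s0 σ)
        + BB K (F s0) (G s0) + ((s.1 - s0 : ℝ) : ℂ) * BB K (F s0) (Dx G s0) := by
      have hs1 : P1 N' (fun σ => G s.1 σ - G s0 σ - ((s.1 - s0 : ℝ) : ℂ) * Dx G s0 σ) := E2.single s
      have hs2 : P1 N' (G s0) := G0.single o
      have hs3 : P1 N' (fun σ => ((s.1 - s0 : ℝ) : ℂ) * Dx G s0 σ) :=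
        ((G1.reindex fun _ : Unit => o).cmul fun _ => ((s.1 - s0 : ℝ) : ℂ)).single ()
      have hg : P1 N (F s0) := F0.single o
      rw [← BB_cmul_right, ← BB_add_right hg hs1 hs2 hK, ← BB_add_right hg (hs1.add hs2) hs3 hK]
      congr 1; funext σ; ring
    have i3 : BB K (Dx F s0) (G s.1) = BB K (Dx F s0) (fun σ => G s.1 σ - G s0 σ)
        + BB K (Dx F s0) (G s0) := by
      have hs1 : P1 N' (fun σ => G s.1 σ - G s0 σ) := E3.single s
      have hs2 : P1 N' (G s0) := G0.single o
      have hg : P1 N (Dx F s0) := F1.single o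
      rw [← BB_add_right hg hs1 hs2 hK]
      congr 1; funext σ; ring
    have b1 := bA s
    have b2 := bB s
    have b3 := bD s
    have : BB K (F s.1) (G s.1) - BB K (F s0) (G s0)
      - (s.1 - s0) • (BB K (Dx F s0) (G s0) + BB K (F s0) (Dx G s0)) =
      BB K (fun σ => F s.1 σ - F s0 σ - ((s.1 - s0 : ℝ) : ℂ) * Dx F s0 σ) (G s.1)
      + ((s.1 - s0 : ℝ) : ℂ) * BB K (Dx F s0) (fun σ => G s.1 σ - G s0 σ)
      + BB K (F s0) (fun σ => G s.1 σ - G s0 σ - ((s.1 - s0 : ℝ) : ℂ) * Dx G s0 σ) := by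
      rw [i1, i2, i3, Complex.real_smul]; ring
    rw [this]
    refine (norm_add₃_le).trans ?_
    have b4 : ‖((s.1 - s0 : ℝ) : ℂ) * BB K (Dx F s0) (fun σ => G s.1 σ - G s0 σ)‖ ≤ B * |s.1 - s0| ^ 2 := by
      rw [norm_mul, Complex.norm_real, Real.norm_eq_abs]
      calc _ ≤ |s.1 - s0| * (B * |s.1 - s0|) := mul_le_mul_of_nonneg_left b2 (abs_nonneg _)
        _ = _ := by ring
    rw [norm_pow, Real.norm_eq_abs]
    nlinarith
  rw [hasDerivAt_iff_isLittleO]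
  refine Asymptotics.IsBigO.trans_isLittleO (g := fun s => (s - s0) ^ 2) ?_ ?_
  · refine Asymptotics.IsBigO.of_bound (A + B + D) ?_
    filter_upwards [Metric.closedBall_mem_nhds s0 one_pos] with s hs
    exact main ⟨s, by simpa [Real.dist_eq] using hs⟩
  · have := (Asymptotics.isLittleO_pow_pow (𝕜 := ℝ) (m := 1) (n := 2) (by norm_num)).comp_tendsto
      (show Tendsto (fun s => s - s0) (𝓝 s0) (𝓝 0) by
        have : Continuous fun s : ℝ => s - s0 := by fun_prop
        simpa using this.tendsto s0)
    simpa [Function.comp_def] using this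

/-! ### The composition integral of two symbols -/

def Tmp (m : ℝ → ℝ → ℝ) (N : ℕ) : Prop :=
  (∀ x ξ, 0 < m x ξ) ∧ ∃ C : ℝ, 0 ≤ C ∧ ∀ x ξ y η : ℝ,
    m x ξ ≤ C * (1 + |x - y| + |ξ - η|) ^ N * m y η

def II (K : ℕ) (t : ℝ) (f g : ℝ → ℝ → ℂ) (x ζ : ℝ) : ℂ :=
  BB K (fun σ => f x (ζ + t * σ)) (fun y => g (x + y) ζ)

section II

variable {ι κ : Type} {m₁ m₂ : ℝ → ℝ → ℝ} {N₁ N₂ : ℕ} {f g : ι → ℝ → ℝ → ℂ}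

lemma it_aff {F : ℝ → ℂ} (hF : ContDiff ℝ (⊤ : ℕ∞) F) (k : ℕ) (ζ t y : ℝ) :
    iteratedDeriv k (fun σ => F (ζ + t * σ)) y = t ^ k • iteratedDeriv k F (ζ + t * y) := by
  have h1 : ContDiff ℝ k (fun s => F (ζ + s)) :=
    (hF.comp (contDiff_const.add contDiff_id)).of_le (by exact_mod_cast le_top)
  rw [congrFun (iteratedDeriv_comp_const_smul h1 t) y, iteratedDeriv_comp_const_add]

lemma symF (hf : Sy m₁ f) (hm : Tmp m₁ N₁) (i : κ → ι) (x ζ t : κ → ℝ) (R : ℝ)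
    (ht : ∀ k, |t k| ≤ R) :
    PG N₁ (fun k => m₁ (x k) (ζ k)) (fun k σ => f (i k) (x k) (ζ k + t k * σ)) := by
  obtain ⟨hp, C0, hC0, hm⟩ := hm
  refine ⟨fun k => ((hf.1 (i k)).seck (x k)).comp (contDiff_const.add (contDiff_const.mul contDiff_id)), fun j => ?_⟩
  obtain ⟨C, hC, hb⟩ := hf.pd 0 j
  refine ⟨|R| ^ j * C * C0 * (1 + |R|) ^ N₁, by positivity, fun k σ => ?_⟩
  rw [it_aff ((hf.1 (i k)).seck (x k)), norm_smul, ← iter_Dk, norm_pow, Real.norm_eq_abs]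
  have h1 := hb (i k) (x k) (ζ k + t k * σ)
  have h2 := hm (x k) (ζ k + t k * σ) (x k) (ζ k)
  simp only [Function.iterate_zero, id_eq, sub_self, abs_zero, add_zero, add_sub_cancel_left] at h1 h2
  have htR : |t k| ≤ |R| := (ht k).trans (le_abs_self R)
  have h3 : 1 + |t k * σ| ≤ (1 + |R|) * (1 + |σ|) := by
    rw [abs_mul]
    nlinarith [abs_nonneg σ, abs_nonneg R, mul_le_mul_of_nonneg_right htR (abs_nonneg σ)]
  have h4 : (1 + |t k * σ|) ^ N₁ ≤ (1 + |R|) ^ N₁ * (1 + |σ|) ^ N₁ := by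
    rw [← mul_pow]; exact pow_le_pow_left₀ (by positivity) h3 _
  have := (hp (x k) (ζ k)).le
  calc _ ≤ |R| ^ j * (C * (C0 * ((1 + |R|) ^ N₁ * (1 + |σ|) ^ N₁) * m₁ (x k) (ζ k))) := by
        refine mul_le_mul (pow_le_pow_left₀ (abs_nonneg _) htR j) (h1.trans ?_) (norm_nonneg _) (by positivity)
        refine mul_le_mul_of_nonneg_left (h2.trans ?_) hC
        gcongr
    _ = _ := by rw [zpow_natCast]; ring

lemma symG (hg : Sy m₂ g) (hm : Tmp m₂ N₂) (i : κ → ι) (x ζ : κ → ℝ) :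
    PG N₂ (fun k => m₂ (x k) (ζ k)) (fun k y => g (i k) (x k + y) (ζ k)) := by
  obtain ⟨hp, C0, hC0, hm⟩ := hm
  refine ⟨fun k => ((hg.1 (i k)).secx (ζ k)).comp (contDiff_const.add contDiff_id), fun j => ?_⟩
  obtain ⟨C, hC, hb⟩ := hg.pd j 0
  refine ⟨C * C0, by positivity, fun k y => ?_⟩
  rw [iteratedDeriv_comp_const_add j (fun x => g (i k) x (ζ k))]
  beta_reduce
  rw [← iter_Dx]
  have h1 := hb (i k) (x k + y) (ζ k)
  have h2 := hm (x k + y) (ζ k) (x k) (ζ k)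
  simp only [Function.iterate_zero, id_eq, sub_self, abs_zero, add_zero, add_sub_cancel_left] at h1 h2
  refine h1.trans ((mul_le_mul_of_nonneg_left h2 hC).trans (le_of_eq ?_))
  rw [zpow_natCast]; ring

lemma Tmp.near (hm : Tmp m₁ N₁) (x0 ζ0 : ℝ) : ∃ D : ℝ, 0 ≤ D ∧ ∀ x ζ, |x - x0| ≤ 1 → |ζ - ζ0| ≤ 1 →
    m₁ x ζ ≤ D := by
  obtain ⟨hp, C0, hC0, hm⟩ := hm
  have := (hp x0 ζ0).le
  refine ⟨C0 * 3 ^ N₁ * m₁ x0 ζ0, by positivity, fun x ζ hx hζ => (hm x ζ x0 ζ0).trans ?_⟩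
  gcongr
  linarith

lemma symF1 (hf : Sy m₁ f) (hm : Tmp m₁ N₁) (i : ι) {s0 : ℝ} (x ζ t : JJ s0 → ℝ) (R x0 ζ0 : ℝ)
    (ht : ∀ k, |t k| ≤ R) (hx : ∀ k, |x k - x0| ≤ 1) (hζ : ∀ k, |ζ k - ζ0| ≤ 1) :
    PG N₁ (fun _ => 1) (fun k σ => f i (x k) (ζ k + t k * σ)) := by
  obtain ⟨D, hD, h⟩ := hm.near x0 ζ0
  exact (symF hf hm (fun _ => i) x ζ t R ht).monow D hD fun k => by
    simpa using h _ _ (hx k) (hζ k)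

lemma symG1 (hf : Sy m₁ f) (hm : Tmp m₁ N₁) (i : ι) {s0 : ℝ} (x ζ : JJ s0 → ℝ) (x0 ζ0 : ℝ)
    (hx : ∀ k, |x k - x0| ≤ 1) (hζ : ∀ k, |ζ k - ζ0| ≤ 1) :
    PG N₁ (fun _ => 1) (fun k y => f i (x k + y) (ζ k)) := by
  obtain ⟨D, hD, h⟩ := hm.near x0 ζ0
  exact (symG hf hm (fun _ => i) x ζ).monow D hD fun k => by
    simpa using h _ _ (hx k) (hζ k)

lemma Sm2.aff {a : ℝ → ℝ → ℂ} (h : Sm2 a) {p q : ℝ × ℝ → ℝ} (hp : ContDiff ℝ (⊤ : ℕ∞) p)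
    (hq : ContDiff ℝ (⊤ : ℕ∞) q) : Sm2 fun s y => a (p (s, y)) (q (s, y)) :=
  h.comp (hp.prodMk hq)

lemma II_dx (hf : Sy m₁ f) (hm₁ : Tmp m₁ N₁) (hg : Sy m₂ g) (hm₂ : Tmp m₂ N₂) {K : ℕ}
    (hK : N₁ + 2 ≤ K) (t : ℝ) (i : ι) (x ζ : ℝ) :
    HasDerivAt (fun x => II K t (f i) (g i) x ζ)
      (II K t (Dx (f i)) (g i) x ζ + II K t (f i) (Dx (g i)) x ζ) x := by
  have dG : ∀ b : ℝ → ℝ → ℂ, Dx (fun s y => b (s + y) ζ) = fun s y => Dx b (s + y) ζ := fun b => by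
    funext s y; exact deriv_comp_add_const (fun s => b s ζ) y s
  have dF : ∀ b : ℝ → ℝ → ℂ, Dx (fun s σ => b s (ζ + t * σ)) = fun s σ => Dx b s (ζ + t * σ) :=
    fun b => rfl
  have F : ∀ {b : ι → ℝ → ℝ → ℂ}, Sy m₁ b → PG N₁ (fun _ : JJ x => 1) (fun k σ => b i k.1 (ζ + t * σ)) :=
    fun hb => symF1 hb hm₁ i (fun k => k.1) (fun _ => ζ) (fun _ => t) |t| x ζ (fun _ => le_rfl)
      (fun k => k.2) (by simp)
  have G : ∀ {b : ι → ℝ → ℝ → ℂ}, Sy m₂ b → PG N₂ (fun _ : JJ x => 1) (fun k y => b i (k.1 + y) ζ) :=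
    fun hb => symG1 hb hm₂ i (fun k => k.1) (fun _ => ζ) x ζ (fun k => k.2) (by simp)
  have := BB_hasDeriv (F := fun s σ => f i s (ζ + t * σ)) (G := fun s y => g i (s + y) ζ) (s0 := x)
    (N := N₁) (N' := N₂) (K := K)
    ((hf.1 i).aff contDiff_fst (contDiff_const.add (contDiff_const.mul contDiff_snd)))
    ((hg.1 i).aff (contDiff_fst.add contDiff_snd) contDiff_const) (by omega)
    (F hf) (by rw [dF]; exact F hf.dx) (by rw [dF, dF]; exact F hf.dx.dx)
    (G hg) (by rw [dG]; exact G hg.dx) (by rw [dG, dG]; exact G hg.dx.dx)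
  rw [dF, dG] at this
  exact this

lemma II_dk (hf : Sy m₁ f) (hm₁ : Tmp m₁ N₁) (hg : Sy m₂ g) (hm₂ : Tmp m₂ N₂) {K : ℕ}
    (hK : N₁ + 2 ≤ K) (t : ℝ) (i : ι) (x ζ : ℝ) :
    HasDerivAt (fun ζ => II K t (f i) (g i) x ζ)
      (II K t (Dk (f i)) (g i) x ζ + II K t (f i) (Dk (g i)) x ζ) ζ := by
  have dG : ∀ b : ℝ → ℝ → ℂ, Dx (fun s y => b (x + y) s) = fun s y => Dk b (x + y) s := fun b => rfl
  have dF : ∀ b : ℝ → ℝ → ℂ, Dx (fun s σ => b x (s + t * σ)) = fun s σ => Dk b x (s + t * σ) :=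
    fun b => by funext s σ; exact deriv_comp_add_const (fun s => b x s) (t * σ) s
  have F : ∀ {b : ι → ℝ → ℝ → ℂ}, Sy m₁ b → PG N₁ (fun _ : JJ ζ => 1) (fun k σ => b i x (k.1 + t * σ)) :=
    fun hb => symF1 hb hm₁ i (fun _ => x) (fun k => k.1) (fun _ => t) |t| x ζ (fun _ => le_rfl)
      (by simp) (fun k => k.2)
  have G : ∀ {b : ι → ℝ → ℝ → ℂ}, Sy m₂ b → PG N₂ (fun _ : JJ ζ => 1) (fun k y => b i (x + y) k.1) :=
    fun hb => symG1 hb hm₂ i (fun _ => x) (fun k => k.1) x ζ (by simp) (fun k => k.2)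
  have := BB_hasDeriv (F := fun s σ => f i x (s + t * σ)) (G := fun s y => g i (x + y) s) (s0 := ζ)
    (N := N₁) (N' := N₂) (K := K)
    ((hf.1 i).aff contDiff_const (contDiff_fst.add (contDiff_const.mul contDiff_snd)))
    ((hg.1 i).aff (contDiff_const.add contDiff_snd) contDiff_fst) (by omega)
    (F hf) (by rw [dF]; exact F hf.dk) (by rw [dF, dF]; exact F hf.dk.dk)
    (G hg) (by rw [dG]; exact G hg.dk) (by rw [dG, dG]; exact G hg.dk.dk)
  rw [dF, dG] at this
  exact this

lemma BB_zero_right (K : ℕ) (F : ℝ → ℂ) : BB K F (fun _ => 0) = 0 := by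
  simpa using BB_cmul_right 0 F (fun _ => 0) K

lemma II_dt (hf : Sy m₁ f) (hm₁ : Tmp m₁ N₁) (hg : Sy m₂ g) (hm₂ : Tmp m₂ N₂) {K : ℕ}
    (hK : N₁ + 4 ≤ K) (t : ℝ) (i : ι) (x ζ : ℝ) :
    HasDerivAt (fun t => II K t (f i) (g i) x ζ)
      (-Complex.I * II K t (Dk (f i)) (Dx (g i)) x ζ) t := by
  have dF : ∀ b : ℝ → ℝ → ℂ, Sm2 b → ∀ s σ : ℝ,
      HasDerivAt (fun s : ℝ => b x (ζ + s * σ)) (σ * Dk b x (ζ + s * σ)) s := fun b hb s σ => by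
    have h1 : HasDerivAt (fun s : ℝ => ζ + s * σ) σ s := by
      simpa using ((hasDerivAt_id s).mul_const σ).const_add ζ
    have h2 := HasDerivAt.scomp s (hb.hk x (ζ + s * σ)) h1
    simpa [Function.comp_def] using h2
  have d1 : ∀ b : ℝ → ℝ → ℂ, Sm2 b → Dx (fun s σ => b x (ζ + s * σ)) =
      fun s σ : ℝ => (σ : ℂ) * Dk b x (ζ + s * σ) := fun b hb => by
    funext s σ; exact (dF b hb s σ).deriv
  have d2 : ∀ b : ℝ → ℝ → ℂ, Sm2 b → Dx (fun s σ : ℝ => (σ : ℂ) * b x (ζ + s * σ)) =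
      fun s σ : ℝ => (σ : ℂ) * ((σ : ℂ) * Dk b x (ζ + s * σ)) := fun b hb => by
    funext s σ; exact ((dF b hb s σ).const_mul (σ : ℂ)).deriv
  have F : ∀ {b : ι → ℝ → ℝ → ℂ}, Sy m₁ b → PG N₁ (fun _ : JJ t => 1) (fun k σ => b i x (ζ + k.1 * σ)) :=
    fun hb => symF1 hb hm₁ i (fun _ => x) (fun _ => ζ) (fun k => k.1) (|t| + 1) x ζ (fun k => by
      have := k.2; have := abs_sub_abs_le_abs_sub k.1 t; linarith) (by simp) (by simp)
  have F' : ∀ {b : ι → ℝ → ℝ → ℂ}, Sy m₁ b → PG (1 + N₁) (fun _ : JJ t => 1)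
      (fun k σ => (σ : ℂ) * b i x (ζ + k.1 * σ)) := fun hb => by
    simpa using (PG.id (κ := JJ t)).mul (F hb) (by simp)
  have F'' : ∀ {b : ι → ℝ → ℝ → ℂ}, Sy m₁ b → PG (1 + (1 + N₁)) (fun _ : JJ t => 1)
      (fun k σ => (σ : ℂ) * ((σ : ℂ) * b i x (ζ + k.1 * σ))) := fun hb => by
    simpa using (PG.id (κ := JJ t)).mul (F' hb) (by simp)
  have G : ∀ {b : ι → ℝ → ℝ → ℂ}, Sy m₂ b → PG N₂ (fun _ : JJ t => 1) (fun _ y => b i (x + y) ζ) :=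
    fun hb => symG1 hb hm₂ i (fun _ => x) (fun _ => ζ) x ζ (by simp) (by simp)
  have hz : Dx (fun (_ : ℝ) y => g i (x + y) ζ) = fun _ _ => 0 := by
    funext s y; exact deriv_const _ _
  have z0 : PG (N₂ : ℤ) (fun _ : JJ t => 1) (fun _ _ => (0 : ℂ)) := by
    refine ⟨fun _ => contDiff_const, fun k => ⟨0, le_rfl, fun _ y => ?_⟩⟩
    rw [show iteratedDeriv k (fun _ : ℝ => (0 : ℂ)) y = 0 by simp]; simp
  have := BB_hasDeriv (F := fun s σ => f i x (ζ + s * σ)) (G := fun _ y => g i (x + y) ζ) (s0 := t)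
    (N := 1 + (1 + N₁)) (N' := N₂) (K := K)
    ((hf.1 i).aff contDiff_const (contDiff_const.add (contDiff_fst.mul contDiff_snd)))
    ((hg.1 i).aff (contDiff_const.add contDiff_snd) contDiff_const) (by omega)
    ((F hf).monoN (by omega) (by simp)) (by rw [d1 _ (hf.1 i)]; exact (F' hf.dk).monoN (by omega) (by simp))
    (by rw [d1 _ (hf.1 i), d2 _ (hf.1 i).dk]; exact F'' hf.dk.dk)
    (G hg) (by rw [hz]; exact z0) (by rw [hz, show Dx (fun _ _ => 0) = fun _ _ => 0 from Dx_const 0]; exact z0)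
  rw [hz, BB_zero_right, add_zero, d1 _ (hf.1 i)] at this
  refine this.congr_deriv ?_
  let o : JJ t := ⟨t, by simp⟩
  have hb1 : P1 N₁ (fun σ => Dk (f i) x (ζ + t * σ)) := (F hf.dk).single o
  have hb2 : P1 N₂ (fun y => g i (x + y) ζ) := (G hg).single o
  have hp := BB_parts hb1 hb2 (K := K) (by omega)
  have hd : deriv (fun y => g i (x + y) ζ) = fun y => Dx (g i) (x + y) ζ := by
    funext y; exact deriv_comp_const_add (fun s => g i s ζ) x y
  rw [hd] at hp
  unfold II
  rw [← hp, ← BB_cmul_left]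
  congr 1; funext σ
  linear_combination ((σ : ℂ) * Dk (f i) x (ζ + t * σ)) * Complex.I_mul_I

lemma II_zero (hg : Sy m₂ g) (hm₂ : Tmp m₂ N₂) {K : ℕ}
    (hK : 2 ≤ K) (f : ℝ → ℝ → ℂ) (i : ι) (x ζ : ℝ) : II K 0 f (g i) x ζ = f x ζ * g i x ζ := by
  unfold II
  have := (symG (κ := Unit) hg hm₂ (fun _ => i) (fun _ => x) (fun _ => ζ)).single ()
  simpa using BB_const (f x ζ) this hK

lemma II_bnd (hf : Sy m₁ f) (hm₁ : Tmp m₁ N₁) (hg : Sy m₂ g) (hm₂ : Tmp m₂ N₂) {K : ℕ}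
    (hK : N₁ + 2 ≤ K) (t : ι → ℝ) (R : ℝ) (ht : ∀ i, |t i| ≤ R) :
    Bnd (fun x ζ => m₁ x ζ * m₂ x ζ) (fun i => II K (t i) (f i) (g i)) := by
  have F := symF (κ := ι × ℝ × ℝ) hf hm₁ (fun k => k.1) (fun k => k.2.1) (fun k => k.2.2)
    (fun k => t k.1) R (fun k => ht k.1)
  have G := symG (κ := ι × ℝ × ℝ) hg hm₂ (fun k => k.1) (fun k => k.2.1) (fun k => k.2.2)
  obtain ⟨C, hC, h⟩ := F.BB_bd G K (by omega) (fun k => (hm₁.1 _ _).le)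
  exact ⟨C, hC, fun i x ζ => h (i, x, ζ)⟩

lemma Tmp.mul (h₁ : Tmp m₁ N₁) (h₂ : Tmp m₂ N₂) : Tmp (fun x ζ => m₁ x ζ * m₂ x ζ) (N₁ + N₂) := by
  obtain ⟨p1, C1, hC1, h1⟩ := h₁
  obtain ⟨p2, C2, hC2, h2⟩ := h₂
  refine ⟨fun x ξ => mul_pos (p1 _ _) (p2 _ _), C1 * C2, by positivity, fun x ξ y η => ?_⟩
  have := (p1 y η).le
  have := (p2 y η).le
  calc _ ≤ (C1 * (1 + |x - y| + |ξ - η|) ^ N₁ * m₁ y η) * (C2 * (1 + |x - y| + |ξ - η|) ^ N₂ * m₂ y η) :=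
        mul_le_mul (h1 x ξ y η) (h2 x ξ y η) (p2 _ _).le (by positivity)
    _ = _ := by rw [pow_add]; ring

end II

/-! ### Regularity from partial derivatives -/

lemma cont_of_partial {u ux uk : ℝ → ℝ → ℂ} (hx : ∀ x ζ, HasDerivAt (fun x => u x ζ) (ux x ζ) x)
    (hk : ∀ x ζ, HasDerivAt (fun ζ => u x ζ) (uk x ζ) ζ)
    (hb : ∀ x0 ζ0, ∃ D : ℝ, 0 ≤ D ∧ ∀ x ζ, |x - x0| ≤ 1 → |ζ - ζ0| ≤ 1 → ‖ux x ζ‖ ≤ D) :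
    Continuous (fun q : ℝ × ℝ => u q.1 q.2) := by
  rw [continuous_iff_continuousAt]
  rintro ⟨x0, ζ0⟩
  obtain ⟨D, hD, hb⟩ := hb x0 ζ0
  have h1 : Tendsto (fun q : ℝ × ℝ => u q.1 q.2 - u x0 q.2) (𝓝 (x0, ζ0)) (𝓝 0) := by
    refine squeeze_zero_norm' (a := fun q : ℝ × ℝ => D * ‖q.1 - x0‖) ?_ ?_
    · filter_upwards [Metric.closedBall_mem_nhds (x0, ζ0) one_pos] with q hq
      rw [Metric.mem_closedBall, Prod.dist_eq, max_le_iff, Real.dist_eq, Real.dist_eq] at hq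
      refine (convex_closedBall x0 1).norm_image_sub_le_of_norm_hasDerivWithin_le
        (f := fun x => u x q.2) (fun x _ => (hx x q.2).hasDerivWithinAt) (fun x hx' => ?_)
        (Metric.mem_closedBall_self zero_le_one) (by rw [Metric.mem_closedBall, Real.dist_eq]; exact hq.1)
      rw [Metric.mem_closedBall, Real.dist_eq] at hx'
      exact hb x q.2 hx' hq.2
    · have : Continuous fun q : ℝ × ℝ => D * ‖q.1 - x0‖ := by fun_prop
      simpa using this.tendsto (x0, ζ0)
  have h2 : Tendsto (fun q : ℝ × ℝ => u x0 q.2) (𝓝 (x0, ζ0)) (𝓝 (u x0 ζ0)) :=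
    (hk x0 ζ0).continuousAt.tendsto.comp (continuous_snd.tendsto (x0, ζ0))
  have := h1.add h2
  simpa [ContinuousAt] using this

lemma cd_of_partial {n : ℕ} {u ux uk : ℝ → ℝ → ℂ} (hx : ∀ x ζ, HasDerivAt (fun x => u x ζ) (ux x ζ) x)
    (hk : ∀ x ζ, HasDerivAt (fun ζ => u x ζ) (uk x ζ) ζ)
    (h1 : ContDiff ℝ n (fun q : ℝ × ℝ => ux q.1 q.2)) (h2 : ContDiff ℝ n (fun q : ℝ × ℝ => uk q.1 q.2)) :
    ContDiff ℝ (n + 1) (fun q : ℝ × ℝ => u q.1 q.2) := by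
  let T : ℂ →L[ℝ] (ℝ →L[ℝ] ℂ) := ContinuousLinearMap.smulRightL ℝ ℝ ℂ (1 : ℝ →L[ℝ] ℝ)
  have hT : ∀ c, T c = ContinuousLinearMap.toSpanSingleton ℝ c := fun c => by
    ext; simp [T]
  refine contDiff_succ_iff_hasFDerivAt.2
    ⟨fun q => (T (ux q.1 q.2)).coprod (T (uk q.1 q.2)), ?_, fun q => ?_⟩
  · have e : (fun q : ℝ × ℝ => (T (ux q.1 q.2)).coprod (T (uk q.1 q.2))) = fun q =>
      (T (ux q.1 q.2)).comp (ContinuousLinearMap.fst ℝ ℝ ℝ) + (T (uk q.1 q.2)).comp (ContinuousLinearMap.snd ℝ ℝ ℝ) := by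
      funext q; ext <;> simp
    rw [e]
    exact ((T.contDiff.comp h1).clm_comp contDiff_const).add ((T.contDiff.comp h2).clm_comp contDiff_const)
  · have := hasStrictFDerivAt_uncurry_coprod (𝕜 := ℝ) (u := q) (f := u) (f₁ := fun x ζ => T (ux x ζ))
      (f₂ := fun x ζ => T (uk x ζ)) (Eventually.of_forall fun v => ?_) (Eventually.of_forall fun v => ?_)
      (T.continuous.comp h1.continuous).continuousAt (T.continuous.comp h2.continuous).continuousAt
    · exact this.hasFDerivAt
    · have := (hx v.1 v.2).hasFDerivAt
      rw [← hT] at this; exact this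
    · have := (hk v.1 v.2).hasFDerivAt
      rw [← hT] at this; exact this

/-! ### The composition integral is a symbol, with an expansion -/

lemma Sm2.comm_itx {a : ℝ → ℝ → ℂ} (h : Sm2 a) (n : ℕ) : Dk (Dx^[n] a) = Dx^[n] (Dk a) := by
  induction n with
  | zero => rfl
  | succ n ih => rw [Function.iterate_succ_apply', ← (h.itx n).comm, ih, Function.iterate_succ_apply']

lemma taylor (M : ℕ) : ∀ (φ : ℕ → ℝ → ℂ) (C : ℝ), (∀ k t, HasDerivAt (φ k) (φ (k + 1) t) t) →
    (∀ t ∈ Set.Icc (0 : ℝ) 1, ‖φ M t‖ ≤ C) → ∀ h ∈ Set.Icc (0 : ℝ) 1,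
    ‖φ 0 h - ∑ k ∈ Finset.range M, (h : ℂ) ^ k / (k.factorial : ℂ) * φ k 0‖ ≤ C * h ^ M := by
  induction M with
  | zero => intro φ C _ hb h hh; simpa using hb h hh
  | succ M ih =>
    intro φ C hd hb h hh
    have ih' := ih (fun k => φ (k + 1)) C (fun k t => hd (k + 1) t) hb
    have hC : 0 ≤ C := (norm_nonneg _).trans (hb 0 ⟨le_rfl, zero_le_one⟩)
    have hder : ∀ t : ℝ, HasDerivAt (fun t : ℝ => φ 0 t -
        ∑ k ∈ Finset.range (M + 1), (t : ℂ) ^ k / (k.factorial : ℂ) * φ k 0)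
        (φ 1 t - ∑ k ∈ Finset.range M, (t : ℂ) ^ k / (k.factorial : ℂ) * φ (k + 1) 0) t := by
      intro t
      refine (hd 0 t).sub ?_
      have h1 : ∀ k ∈ Finset.range (M + 1), HasDerivAt (fun t : ℝ => (t : ℂ) ^ k / (k.factorial : ℂ) * φ k 0)
          ((k * (t : ℂ) ^ (k - 1)) / (k.factorial : ℂ) * φ k 0) t := fun k _ => by
        have := (((hasDerivAt_id t).ofReal_comp).fun_pow k).div_const (k.factorial : ℂ) |>.mul_const (φ k 0)
        simpa using this
      have h2 := HasDerivAt.fun_sum h1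
      rw [Finset.sum_range_succ'] at h2
      refine h2.congr_deriv ?_
      simp only [Nat.cast_zero, zero_mul, zero_div, add_zero]
      refine Finset.sum_congr rfl fun k _ => ?_
      congr 1
      rw [Nat.factorial_succ]
      have : (k.factorial : ℂ) ≠ 0 := by exact_mod_cast k.factorial_ne_zero
      have : ((k : ℂ) + 1) ≠ 0 := by exact_mod_cast k.succ_ne_zero
      push_cast
      field_simp
    have := (convex_Icc (0 : ℝ) h).norm_image_sub_le_of_norm_hasDerivWithin_le
      (f := fun t : ℝ => φ 0 t - ∑ k ∈ Finset.range (M + 1), (t : ℂ) ^ k / (k.factorial : ℂ) * φ k 0)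
      (C := C * h ^ M) (x := 0) (y := h) (fun t _ => (hder t).hasDerivWithinAt) (fun t ht => ?_)
      ⟨le_rfl, hh.1⟩ ⟨hh.1, le_rfl⟩
    · have z : (φ 0 0 - ∑ k ∈ Finset.range (M + 1), ((0 : ℝ) : ℂ) ^ k / (k.factorial : ℂ) * φ k 0) = 0 := by
        rw [Finset.sum_range_succ']; simp
      simp only [z, sub_zero, Real.norm_of_nonneg hh.1] at this
      exact this.trans (le_of_eq (by ring))
    · refine (ih' t ⟨ht.1, ht.2.trans hh.2⟩).trans ?_
      exact mul_le_mul_of_nonneg_left (pow_le_pow_left₀ ht.1 ht.2 M) hC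

def TS (M : ℕ) (h : ℝ) (f g : ℝ → ℝ → ℂ) (x ζ : ℝ) : ℂ :=
  ∑ k ∈ Finset.range M, (-Complex.I * h) ^ k / (k.factorial : ℂ) * ((Dk^[k] f) x ζ * (Dx^[k] g) x ζ)

def RR (K M : ℕ) (h : ℝ) (f g : ℝ → ℝ → ℂ) (x ζ : ℝ) : ℂ :=
  ((h : ℂ) ^ M)⁻¹ * (II K h f g x ζ - TS M h f g x ζ)

lemma TS_dx (M : ℕ) (h : ℝ) {f g : ℝ → ℝ → ℂ} (hf : Sm2 f) (hg : Sm2 g) (x ζ : ℝ) :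
    HasDerivAt (fun x => TS M h f g x ζ) (TS M h (Dx f) g x ζ + TS M h f (Dx g) x ζ) x := by
  unfold TS
  rw [← Finset.sum_add_distrib]
  refine HasDerivAt.fun_sum fun k _ => ?_
  refine ((((hf.itk k).hx x ζ).mul ((hg.itx k).hx x ζ)).const_mul _).congr_deriv ?_
  rw [hf.comm_itk, ← Function.iterate_succ_apply' Dx k g, Function.iterate_succ_apply]
  ring

lemma TS_dk (M : ℕ) (h : ℝ) {f g : ℝ → ℝ → ℂ} (hf : Sm2 f) (hg : Sm2 g) (x ζ : ℝ) :
    HasDerivAt (fun ζ => TS M h f g x ζ) (TS M h (Dk f) g x ζ + TS M h f (Dk g) x ζ) ζ := by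
  unfold TS
  rw [← Finset.sum_add_distrib]
  refine HasDerivAt.fun_sum fun k _ => ?_
  refine ((((hf.itk k).hk x ζ).mul ((hg.itx k).hk x ζ)).const_mul _).congr_deriv ?_
  rw [hg.comm_itx, ← Function.iterate_succ_apply' Dk k f, Function.iterate_succ_apply]
  ring

lemma TS_sm (M : ℕ) (h : ℝ) {f g : ℝ → ℝ → ℂ} (hf : Sm2 f) (hg : Sm2 g) : Sm2 (TS M h f g) := by
  unfold Sm2 TS
  exact ContDiff.sum fun k _ => contDiff_const.mul ((hf.itk k).mul (hg.itx k))

section II2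

variable {ι : Type} {m₁ m₂ : ℝ → ℝ → ℝ} {N₁ N₂ : ℕ} {f g : ι → ℝ → ℝ → ℂ}

lemma II_cont (hm₁ : Tmp m₁ N₁) (hm₂ : Tmp m₂ N₂) {K : ℕ} (hK : N₁ + 2 ≤ K) (t : ℝ)
    (hf : Sy m₁ f) (hg : Sy m₂ g) (i : ι) :
    Continuous (fun q : ℝ × ℝ => II K t (f i) (g i) q.1 q.2) := by
  refine cont_of_partial (II_dx hf hm₁ hg hm₂ hK t i) (II_dk hf hm₁ hg hm₂ hK t i) fun x0 ζ0 => ?_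
  obtain ⟨C, hC, h⟩ := (II_bnd hf.dx hm₁ hg hm₂ hK (fun _ => t) |t| (fun _ => le_rfl)).add
    (II_bnd hf hm₁ hg.dx hm₂ hK (fun _ => t) |t| (fun _ => le_rfl))
  obtain ⟨D, hD, h'⟩ := (hm₁.mul hm₂).near x0 ζ0
  exact ⟨C * D, by positivity, fun x ζ hx hζ => (h i x ζ).trans
    (mul_le_mul_of_nonneg_left (h' x ζ hx hζ) hC)⟩

lemma II_sm (hm₁ : Tmp m₁ N₁) (hm₂ : Tmp m₂ N₂) {K : ℕ} (hK : N₁ + 2 ≤ K) (t : ℝ)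
    (hf : Sy m₁ f) (hg : Sy m₂ g) (i : ι) : Sm2 (II K t (f i) (g i)) := by
  refine contDiff_infty.2 fun n => ?_
  induction n generalizing f g with
  | zero => exact contDiff_zero.2 (II_cont hm₁ hm₂ hK t hf hg i)
  | succ n ih =>
    have a1 := ih (f := fun i => Dx (f i)) (g := g) hf.dx hg
    have a2 := ih (f := f) (g := fun i => Dx (g i)) hf hg.dx
    have a3 := ih (f := fun i => Dk (f i)) (g := g) hf.dk hg
    have a4 := ih (f := f) (g := fun i => Dk (g i)) hf hg.dk
    have h1 := a1.add a2
    have h2 := a3.add a4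
    have h3 := cd_of_partial (II_dx hf hm₁ hg hm₂ hK t i) (II_dk hf hm₁ hg hm₂ hK t i) h1 h2
    exact_mod_cast h3

lemma RR_dx (hm₁ : Tmp m₁ N₁) (hm₂ : Tmp m₂ N₂) {K : ℕ} (hK : N₁ + 4 ≤ K) (M : ℕ) (t : ℝ)
    (hf : Sy m₁ f) (hg : Sy m₂ g) (i : ι) : Dx (RR K M t (f i) (g i)) =
      fun x ζ => RR K M t (Dx (f i)) (g i) x ζ + RR K M t (f i) (Dx (g i)) x ζ := by
  funext x ζ
  have := ((II_dx hf hm₁ hg hm₂ (K := K) (by omega) t i x ζ).sub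
    (TS_dx M t (hf.1 i) (hg.1 i) x ζ)).const_mul ((t : ℂ) ^ M)⁻¹
  refine this.deriv.trans ?_
  unfold RR; ring

lemma RR_dk (hm₁ : Tmp m₁ N₁) (hm₂ : Tmp m₂ N₂) {K : ℕ} (hK : N₁ + 4 ≤ K) (M : ℕ) (t : ℝ)
    (hf : Sy m₁ f) (hg : Sy m₂ g) (i : ι) : Dk (RR K M t (f i) (g i)) =
      fun x ζ => RR K M t (Dk (f i)) (g i) x ζ + RR K M t (f i) (Dk (g i)) x ζ := by
  funext x ζ
  have := ((II_dk hf hm₁ hg hm₂ (K := K) (by omega) t i x ζ).sub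
    (TS_dk M t (hf.1 i) (hg.1 i) x ζ)).const_mul ((t : ℂ) ^ M)⁻¹
  refine this.deriv.trans ?_
  unfold RR; ring

lemma RR_sm (hm₁ : Tmp m₁ N₁) (hm₂ : Tmp m₂ N₂) {K : ℕ} (hK : N₁ + 4 ≤ K) (M : ℕ) (t : ℝ)
    (hf : Sy m₁ f) (hg : Sy m₂ g) (i : ι) : Sm2 (RR K M t (f i) (g i)) :=
  contDiff_const.mul ((II_sm hm₁ hm₂ (by omega) t hf hg i).sub (TS_sm M t (hf.1 i) (hg.1 i)))

lemma RR_bnd (hm₁ : Tmp m₁ N₁) (hm₂ : Tmp m₂ N₂) {K : ℕ} (hK : N₁ + 4 ≤ K) (M : ℕ) (t : ι → ℝ)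
    (ht : ∀ i, 0 < t i ∧ t i ≤ 1) (hf : Sy m₁ f) (hg : Sy m₂ g) :
    Bnd (fun x ζ => m₁ x ζ * m₂ x ζ) (fun i => RR K M (t i) (f i) (g i)) := by
  obtain ⟨C, hC, hb⟩ := II_bnd (ι := ι × {t : ℝ // |t| ≤ 1}) ((hf.itk M).reindex Prod.fst) hm₁
    ((hg.itx M).reindex Prod.fst) hm₂ (K := K) (by omega) (fun i => i.2.1) 1 (fun i => i.2.2)
  refine ⟨C, hC, fun i x ζ => ?_⟩
  have := taylor M (fun k s => (-Complex.I) ^ k * II K s (Dk^[k] (f i)) (Dx^[k] (g i)) x ζ)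
    (C * (m₁ x ζ * m₂ x ζ)) (fun k s => ?_) (fun s hs => ?_) (t i) ⟨(ht i).1.le, (ht i).2⟩
  · have e : TS M (t i) (f i) (g i) x ζ = ∑ k ∈ Finset.range M, (t i : ℂ) ^ k / (k.factorial : ℂ) *
        ((-Complex.I) ^ k * II K 0 (Dk^[k] (f i)) (Dx^[k] (g i)) x ζ) := by
      unfold TS
      refine Finset.sum_congr rfl fun k _ => ?_
      rw [II_zero (hg.itx k) hm₂ (by omega), mul_pow]; ring
    have h0 : (0 : ℝ) < t i ^ M := pow_pos (ht i).1 M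
    unfold RR
    rw [norm_mul, norm_inv, norm_pow, Complex.norm_real, Real.norm_of_nonneg (ht i).1.le,
      inv_mul_le_iff₀ h0, e]
    simpa [mul_comm] using this
  · have := (II_dt (hf.itk k) hm₁ (hg.itx k) hm₂ hK s i x ζ).const_mul ((-Complex.I) ^ k)
    refine this.congr_deriv ?_
    rw [Function.iterate_succ_apply', Function.iterate_succ_apply', pow_succ]; ring
  · rw [norm_mul, norm_pow, norm_neg, Complex.norm_I, one_pow, one_mul]
    exact hb (i, ⟨s, by rw [abs_of_nonneg hs.1]; exact hs.2⟩) x ζ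

theorem RR_sy (hm₁ : Tmp m₁ N₁) (hm₂ : Tmp m₂ N₂) {K : ℕ} (hK : N₁ + 4 ≤ K) (M : ℕ) (t : ι → ℝ)
    (ht : ∀ i, 0 < t i ∧ t i ≤ 1) (hf : Sy m₁ f) (hg : Sy m₂ g) :
    Sy (fun x ζ => m₁ x ζ * m₂ x ζ) (fun i => RR K M (t i) (f i) (g i)) := by
  refine ⟨fun i => RR_sm hm₁ hm₂ hK M (t i) hf hg i, fun n => ?_⟩
  induction n generalizing f g with
  | zero => exact RR_bnd hm₁ hm₂ hK M t ht hf hg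
  | succ n ih =>
    refine ⟨RR_bnd hm₁ hm₂ hK M t ht hf hg, ?_, ?_⟩
    · simp_rw [fun i => RR_dx hm₁ hm₂ hK M (t i) hf hg i]
      exact Cl.add (fun i => RR_sm hm₁ hm₂ hK M (t i) hf.dx hg i)
        (fun i => RR_sm hm₁ hm₂ hK M (t i) hf hg.dx i) (ih hf.dx hg) (ih hf hg.dx)
    · simp_rw [fun i => RR_dk hm₁ hm₂ hK M (t i) hf hg i]
      exact Cl.add (fun i => RR_sm hm₁ hm₂ hK M (t i) hf.dk hg i)
        (fun i => RR_sm hm₁ hm₂ hK M (t i) hf hg.dk i) (ih hf.dk hg) (ih hf hg.dk)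

lemma II_eq (K M : ℕ) {t : ℝ} (ht : 0 < t) (f g : ℝ → ℝ → ℂ) (x ζ : ℝ) :
    II K t f g x ζ = TS M t f g x ζ + (t : ℂ) ^ M * RR K M t f g x ζ := by
  unfold RR
  have : (t : ℂ) ^ M ≠ 0 := pow_ne_zero _ (by exact_mod_cast ht.ne')
  field_simp
  ring

lemma II_sy (hm₁ : Tmp m₁ N₁) (hm₂ : Tmp m₂ N₂) {K : ℕ} (hK : N₁ + 4 ≤ K) (t : ι → ℝ)
    (ht : ∀ i, 0 < t i ∧ t i ≤ 1) (hf : Sy m₁ f) (hg : Sy m₂ g) :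
    Sy (fun x ζ => m₁ x ζ * m₂ x ζ) (fun i => II K (t i) (f i) (g i)) := by
  have := RR_sy hm₁ hm₂ hK 0 t ht hf hg
  have e : ∀ i, RR K 0 (t i) (f i) (g i) = II K (t i) (f i) (g i) := fun i => by
    funext x ζ; simp [RR, TS]
  simpa only [e] using this

end II2

/-! ### Superposition of pairings -/

lemma PG.shift2 {κ : Type} {N : ℤ} {w : κ → ℝ} {F : κ → ℝ → ℂ} (hF : PG N w F) (hw : ∀ i, 0 ≤ w i) :
    PG N (fun p : κ × ℝ => w p.1 * (1 + |p.2|) ^ N.natAbs) (fun p s => F p.1 (s + p.2)) := by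
  refine ⟨fun p => (hF.1 p.1).comp (contDiff_id.add contDiff_const), fun k => ?_⟩
  obtain ⟨C, hC, h⟩ := hF.2 k
  refine ⟨C, hC, fun p y => ?_⟩
  obtain ⟨i, ξ⟩ := p
  rw [iteratedDeriv_comp_add_const]
  refine (h i _).trans ?_
  rw [← mul_assoc, mul_assoc _ _ ((1 + |y|) ^ N)]
  refine mul_le_mul_of_nonneg_left ?_ (mul_nonneg hC (hw i))
  have key : ∀ a b : ℝ, 1 + |a + b| ≤ (1 + |b|) * (1 + |a|) := fun a b => by
    have := abs_add_le a b
    nlinarith [abs_nonneg a, abs_nonneg b]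
  rcases le_total 0 N with hN | hN
  · lift N to ℕ using hN
    simp only [zpow_natCast, Int.natAbs_natCast]
    rw [← mul_pow]
    exact pow_le_pow_left₀ (jb_pos _).le (key y ξ) N
  · obtain ⟨M, rfl⟩ : ∃ M : ℕ, N = -(M : ℤ) := ⟨N.natAbs, by omega⟩
    simp only [zpow_neg, zpow_natCast, Int.natAbs_neg, Int.natAbs_natCast]
    rw [← div_eq_mul_inv, le_div_iff₀ (pow_pos (jb_pos y) M), inv_mul_le_iff₀ (pow_pos (jb_pos _) M),
      ← mul_pow]
    refine pow_le_pow_left₀ (jb_pos _).le ?_ M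
    have := key (y + ξ) (-ξ)
    simp only [add_neg_cancel_right, abs_neg] at this
    linarith [mul_comm (1 + |ξ|) (1 + |y + ξ|)]

lemma jb_mul (y : ℝ) (M : ℕ) : (1 + |y|) ^ (-((M + 2 : ℕ) : ℤ)) * (1 + |y|) ^ M = (1 + |y|) ^ (-2 : ℤ) := by
  rw [← zpow_natCast (1 + |y|) M, ← zpow_add₀ (jb_pos y).ne']
  congr 1; push_cast; ring

lemma BB_agree' {N' : ℕ} {F G : ℝ → ℂ} (hF : Sw F) (hG : P1 N' G) (K : ℕ) :
    BB K F G = (2 * Real.pi : ℂ)⁻¹ * ∫ y, FT F y * G y := by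
  obtain ⟨Gn, h1, h2, h3⟩ := exists_approx hG
  have hK : (-((2:ℕ) : ℤ)) + 2 ≤ K := by omega
  refine tendsto_nhds_unique (BB_conv (hF 2) h1 h3 hK) ?_
  have e : ∀ n, BB K F (Gn n) = (2 * Real.pi : ℂ)⁻¹ * ∫ y, FT F y * Gn n y := fun n => by
    rw [BB_agree (hF 2) (h2 n) hK, FT_swap hF.int0 (h2 n).int0]
  simp_rw [e]
  refine Tendsto.const_mul _ ?_
  obtain ⟨C, hC, hb⟩ := (hF 2).FT_decay (by norm_num) (by simp) (N' + 2)
  obtain ⟨D, hD, hg⟩ := h1.2 0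
  refine tendsto_integral_of_dominated_convergence (fun y => C * D * (1 + |y|) ^ (-2 : ℤ))
    (fun n => ((FT_cont hF.int0).mul (h1.1 n).continuous).aestronglyMeasurable)
    (int_jb.const_mul _) (fun n => Eventually.of_forall fun y => ?_) (Eventually.of_forall fun y => ?_)
  · have a := hb () y
    have b := hg n y
    rw [mul_one] at a b
    rw [iteratedDeriv_zero, zpow_natCast] at b
    rw [norm_mul]
    have := jb_pos y
    refine (mul_le_mul a b (norm_nonneg _) (by positivity)).trans (le_of_eq ?_)
    rw [← jb_mul y N']; ring
  · refine Tendsto.congr' ?_ tendsto_const_nhds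
    filter_upwards [h3 y] with n hn
    rw [hn.eq_of_nhds]

lemma BB_convF {N N' : ℤ} {F G : ℝ → ℂ} {Fn : ℕ → ℝ → ℂ} (hF : PG N (fun _ => 1) Fn)
    (hG : P1 N' G) (hl : ∀ y, ∀ᶠ n in atTop, Fn n y = F y) {K : ℕ} (hK : N + 2 ≤ K) :
    Tendsto (fun n => BB K (Fn n) G) atTop (𝓝 (BB K F G)) := by
  unfold BB
  refine Tendsto.const_mul _ ?_
  have hG' := hG.reindex fun _ : ℕ => ()
  obtain ⟨C, hC, h⟩ := hF.BB_integrand hG' K hK (by simp)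
  refine tendsto_integral_of_dominated_convergence (fun y => C * (1 + |y|) ^ (-2 : ℤ))
    (fun n => (hF.BB_int hG' K hK (by simp) n).aestronglyMeasurable) (int_jb.const_mul C)
    (fun n => Eventually.of_forall fun y => by simpa using h n y)
    (Eventually.of_forall fun y => ?_)
  refine Tendsto.mul_const _ ?_
  unfold FT
  obtain ⟨D, hD, hb⟩ := (hF.FW K hK (by simp)).2 0
  refine tendsto_integral_of_dominated_convergence (fun y => D * (1 + |y|) ^ (-2 : ℤ))
    (fun n => (FT_int (hF.FW_int K hK (by simp) n) y).aestronglyMeasurable) (int_jb.const_mul D)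
    (fun n => Eventually.of_forall fun s => ?_) (Eventually.of_forall fun s => ?_)
  · rw [norm_mul, nexp, one_mul]; simpa using hb n s
  · refine Tendsto.congr' ?_ tendsto_const_nhds
    filter_upwards [hl s] with n hn
    rw [hn]

lemma comp_abs {N N' M : ℕ} {F V Φ : ℝ → ℂ} {G : ℝ → ℝ → ℂ} (hF : P1 N F)
    (hG : PG N' (fun ξ : ℝ => (1 + |ξ|) ^ M) G) (hGc : Continuous fun p : ℝ × ℝ => G p.1 p.2)
    (hΦ : Continuous Φ)
    (hΦd : ∀ L : ℕ, ∃ C : ℝ, 0 ≤ C ∧ ∀ ξ, ‖Φ ξ‖ ≤ C * (1 + |ξ|) ^ (-(L : ℤ)))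
    (hV : P1 N' V) (hVe : ∀ y : ℝ, V y = ∫ ξ : ℝ, Φ ξ * (Complex.exp (Complex.I * ξ * y) * G ξ y))
    {K : ℕ} (hK : (N : ℤ) + 2 ≤ K) :
    BB K F V = ∫ ξ : ℝ, Φ ξ * BB K (fun s => F (s + ξ)) (G ξ) := by
  obtain ⟨Fn, h1, h2, h3⟩ := exists_approx hF
  have h3' : ∀ y, ∀ᶠ n in atTop, Fn n y = F y := fun y => (h3 y).mono fun n hn => hn.eq_of_nhds
  have w0 : ∀ ξ : ℝ, (0 : ℝ) ≤ (1 + |ξ|) ^ M := fun ξ => by positivity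
  have nexp' : ∀ s y : ℝ, ‖Complex.exp (Complex.I * s * y)‖ = 1 := fun s y => by
    rw [Complex.norm_exp]; simp
  have P : ∀ ξ, P1 N' (G ξ) := fun ξ => (hG.single ξ)
  have int2 : ∀ n, Integrable (fun p : ℝ × ℝ => FT (Fn n) p.1 *
      (Φ p.2 * (Complex.exp (Complex.I * p.2 * p.1) * G p.2 p.1))) (volume.prod volume) := fun n => by
    obtain ⟨C, hC, hb⟩ := (h2 n 2).FT_decay (by norm_num) (by simp) (N' + 2)
    obtain ⟨D, hD, hg⟩ := hG.2 0
    obtain ⟨E, hE, hp⟩ := hΦd (M + 2)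
    have hi := (int_jb.mul_prod int_jb).const_mul (C * D * E)
    refine hi.mono' ?_ (Eventually.of_forall fun p => ?_)
    · refine Continuous.aestronglyMeasurable ?_
      refine ((FT_cont (h2 n).int0).comp continuous_fst).mul ((hΦ.comp continuous_snd).mul
        (Continuous.mul (by fun_prop) (hGc.comp (continuous_snd.prodMk continuous_fst))))
    · obtain ⟨y, ξ⟩ := p
      have a := hb () y
      have b := hg ξ y
      have c := hp ξ
      rw [iteratedDeriv_zero, zpow_natCast] at b
      rw [mul_one] at a
      simp only [norm_mul, nexp', one_mul]
      have := jb_pos y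
      have := jb_pos ξ
      refine (mul_le_mul a (mul_le_mul c b (norm_nonneg _) (by positivity)) (by positivity)
        (by positivity)).trans (le_of_eq ?_)
      rw [← jb_mul y N', ← jb_mul ξ M]; ring
  have step : ∀ n, BB K (Fn n) V = ∫ ξ : ℝ, Φ ξ * BB K (fun s => Fn n (s + ξ)) (G ξ) := fun n => by
    have hn : P1 N (Fn n) := h1.single n
    rw [BB_agree' (h2 n) hV]
    simp_rw [hVe, ← integral_const_mul (FT (Fn n) _)]
    rw [integral_integral_swap (int2 n), ← integral_const_mul]
    congr 1; funext ξ
    rw [← BB_shift hn (P ξ) hK ξ, BB_agree' (N' := N') (h2 n)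
      (by simpa using (P1.expo ξ).mul (P ξ) (by simp)), ← integral_const_mul, ← integral_const_mul,
      ← integral_const_mul]
    congr 1; funext y; ring
  refine tendsto_nhds_unique (BB_convF h1 hV h3' hK) ?_
  simp_rw [step]
  obtain ⟨C, hC, hb⟩ := (h1.shift2 (by simp)).BB_bd (hG.reindex (Prod.snd : ℕ × ℝ → ℝ)) K hK
    (fun p => by positivity)
  obtain ⟨E, hE, hp⟩ := hΦd (N + M + 2)
  refine tendsto_integral_of_dominated_convergence (fun ξ => C * E * (1 + |ξ|) ^ (-2 : ℤ))
    (fun n => ?_) (int_jb.const_mul _) (fun n => Eventually.of_forall fun ξ => ?_)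
    (Eventually.of_forall fun ξ => ?_)
  · have hn : P1 N (Fn n) := h1.single n
    refine (((int2 n).integral_prod_right.const_mul (2 * Real.pi : ℂ)⁻¹).aestronglyMeasurable).congr
      (Eventually.of_forall fun ξ => ?_)
    simp only
    rw [← BB_shift hn (P ξ) hK ξ, BB_agree' (N' := N') (h2 n)
      (by simpa using (P1.expo ξ).mul (P ξ) (by simp)), ← integral_const_mul, ← integral_const_mul,
      ← integral_const_mul]
    congr 1; funext y; ring
  · have a := hb (n, ξ)
    have b := hp ξ
    have := jb_pos ξ
    rw [norm_mul]
    refine (mul_le_mul b a (norm_nonneg _) (by positivity)).trans (le_of_eq ?_)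
    rw [← jb_mul ξ (N + M), pow_add]
    simp only [Int.natAbs_natCast]; ring
  · refine Tendsto.const_mul _ (BB_convF ?_ (P ξ) (fun y => h3' (y + ξ)) hK)
    have := (h1.shift2 (by simp)).reindex (fun n : ℕ => (n, ξ))
    refine this.monow ((1 + |ξ|) ^ N) (by positivity) fun n => by simp

/-! ### Quantization -/

def jw (L : ℕ) (x _ξ : ℝ) : ℝ := (1 + |x|) ^ (-(L : ℤ))

lemma jw_tmp (L : ℕ) : Tmp (jw L) L := by
  refine ⟨fun x ξ => zpow_pos (jb_pos x) _, 1, zero_le_one, fun x ξ y η => ?_⟩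
  unfold jw
  simp only [zpow_neg, zpow_natCast]
  rw [one_mul, ← div_eq_mul_inv, le_div_iff₀ (pow_pos (jb_pos y) L), inv_mul_le_iff₀ (pow_pos (jb_pos x) L),
    ← mul_pow]
  refine pow_le_pow_left₀ (jb_pos _).le ?_ L
  have := abs_sub_abs_le_abs_sub y x
  rw [abs_sub_comm] at this
  nlinarith [abs_nonneg x, abs_nonneg (x - y), abs_nonneg (ξ - η),
    mul_nonneg (abs_nonneg x) (abs_nonneg (x - y)), mul_nonneg (abs_nonneg x) (abs_nonneg (ξ - η))]

lemma Sw.sy {u : ℝ → ℂ} (hu : Sw u) (L : ℕ) : Sy (ι := Unit) (jw L) (fun _ x _ => u x) := by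
  refine Sy.of_pd (fun _ => ?_) fun α β => ?_
  · exact ContDiff.comp (g := u) (f := Prod.fst) hu.cd contDiff_fst
  · cases β with
    | zero =>
      obtain ⟨C, hC, h⟩ := (hu L).2 α
      refine ⟨C, hC, fun i x ξ => ?_⟩
      rw [Function.iterate_zero, id]
      beta_reduce
      rw [iter_Dx]
      simpa [jw] using h () x
    | succ β =>
      have e : (Dk^[β + 1] (fun x _ => u x)) = fun _ _ => 0 := by
        funext x ξ
        rw [iter_Dk, iteratedDeriv_const]; simp
      refine ⟨0, le_rfl, fun i x ξ => ?_⟩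
      rw [e]
      beta_reduce
      rw [iter_Dx, iteratedDeriv_const]; simp

lemma Sw.shift {u : ℝ → ℂ} (hu : Sw u) (x : ℝ) : Sw (fun y => u (x + y)) := fun L => by
  have := (hu L).shift x
  simpa only [add_comm] using this

lemma FT_shift (u : ℝ → ℂ) (x s : ℝ) :
    FT (fun y => u (x + y)) s = Complex.exp (Complex.I * x * s) * FT u s := by
  unfold FT
  rw [← integral_const_mul, ← integral_add_left_eq_self
    (fun y : ℝ => Complex.exp (Complex.I * x * s) * (Complex.exp (-(Complex.I * y * s)) * u y)) x]
  congr 1; funext y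
  rw [← mul_assoc, ← Complex.exp_add]
  congr 2; push_cast; ring

section Op

variable {ι : Type} {m₁ m₂ : ℝ → ℝ → ℝ} {N₁ N₂ : ℕ} {e q : ι → ℝ → ℝ → ℂ}

lemma symF0 (hq : Sy m₁ q) (hm : Tmp m₁ N₁) (i : ι) (h x : ℝ) : P1 N₁ (fun σ => q i x (h * σ)) := by
  have := (symF hq hm (fun _ : Unit => i) (fun _ => x) (fun _ => 0) (fun _ => h) |h| (fun _ => le_rfl)).single ()
  simpa using this

lemma Op_eq (hq : Sy m₁ q) (hm : Tmp m₁ N₁) {K : ℕ} (hK : N₁ + 2 ≤ K) (i : ι) (h : ℝ) {u : ℝ → ℂ}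
    (hu : Sw u) (x : ℝ) :
    Op h (q i) u x = BB K (fun σ => q i x (h * σ)) (fun y => u (x + y)) := by
  rw [BB_agree (symF0 hq hm i h x) (hu.shift x) (by omega), Op]
  congr 2; funext s
  rw [FT_shift]; ring

lemma Op_Sw (hq : Sy m₁ q) (hm : Tmp m₁ N₁) (i : ι) {h : ℝ} (hh : 0 < h ∧ h ≤ 1) {u : ℝ → ℂ}
    (hu : Sw u) : Sw (Op h (q i) u) := by
  intro L
  have e : ∀ x, Op h (q i) u x = II (N₁ + 4) h (q i) (fun x _ => u x) x 0 := fun x => by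
    rw [Op_eq hq hm (K := N₁ + 4) (by omega) i h hu]; simp [II]
  have sy := II_sy hm (jw_tmp (L + N₁)) (K := N₁ + 4) le_rfl (fun _ : Unit => h) (fun _ => hh)
    (hq.reindex fun _ => i) (hu.sy (L + N₁))
  rw [show Op h (q i) u = fun x => II (N₁ + 4) h (q i) (fun x _ => u x) x 0 from funext e]
  obtain ⟨hp, C0, hC0, hm⟩ := hm
  refine ⟨fun _ => (sy.1 ()).secx 0, fun k => ?_⟩
  obtain ⟨C, hC, hb⟩ := sy.pd k 0
  have := hp 0 0
  refine ⟨C * (C0 * m₁ 0 0), by positivity, fun _ y => ?_⟩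
  have := hb () y 0
  rw [Function.iterate_zero, id] at this
  beta_reduce at this
  rw [iter_Dx] at this
  refine this.trans ?_
  rw [mul_one, mul_assoc]
  refine mul_le_mul_of_nonneg_left ?_ hC
  have h1 := hm y 0 0 0
  simp only [sub_zero, abs_zero, add_zero] at h1
  have jp := jb_pos y
  have h2 := mul_le_mul_of_nonneg_right h1 (zpow_nonneg jp.le (-((L + N₁ : ℕ) : ℤ)))
  refine h2.trans (le_of_eq ?_)
  have : (1 + |y|) ^ N₁ * (1 + |y|) ^ (-((L + N₁ : ℕ) : ℤ)) = (1 + |y|) ^ (-(L : ℤ)) := by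
    rw [← zpow_natCast (1 + |y|) N₁, ← zpow_add₀ jp.ne']
    congr 1; push_cast; ring
  rw [← this]; ring

theorem Op_comp (he : Sy m₁ e) (hm₁ : Tmp m₁ N₁) (hq : Sy m₂ q) (hm₂ : Tmp m₂ N₂) {K : ℕ}
    (hK : N₁ + 2 ≤ K) (i : ι) {h : ℝ} (hh : 0 < h ∧ h ≤ 1) {u : ℝ → ℂ} (hu : Sw u) (x : ℝ) :
    Op h (e i) (Op h (q i) u) x = Op h (II K h (e i) (q i)) u x := by
  have hv := Op_Sw hq hm₂ i hh hu
  rw [Op_eq he hm₁ hK i h hv]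
  have hG : PG N₂ (fun ξ : ℝ => (1 + |ξ|) ^ N₂) (fun ξ y => q i (x + y) (h * ξ)) := by
    have := symG hq hm₂ (fun _ : ℝ => i) (fun _ => x) (fun ξ => h * ξ)
    obtain ⟨hp, C0, hC0, hm⟩ := hm₂
    have p0 := hp x 0
    refine this.monow (C0 * m₂ x 0) (by positivity) fun ξ => ?_
    have h1 := hm x (h * ξ) x 0
    simp only [sub_zero, sub_self, abs_zero, add_zero, abs_mul, abs_of_pos hh.1] at h1
    refine h1.trans ?_
    rw [mul_right_comm]
    refine mul_le_mul_of_nonneg_left ?_ (by positivity)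
    refine pow_le_pow_left₀ (by have := hh.1; positivity) ?_ _
    nlinarith [abs_nonneg ξ]
  rw [comp_abs (Φ := fun ξ : ℝ => (2 * Real.pi : ℂ)⁻¹ * (Complex.exp (Complex.I * x * ξ) * FT u ξ))
    (symF0 he hm₁ i h x) hG ?_ ?_ ?_ (((hv.shift x) 0).monoN (by simp) (by simp)) (fun y => ?_)
    (by omega)]
  · rw [Op, ← integral_const_mul]
    congr 1; funext ξ
    rw [II, show (fun s => e i x (h * (s + ξ))) = fun σ => e i x (h * ξ + h * σ) from
      funext fun s => by rw [mul_add, add_comm]]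
    ring
  · exact (hq.1 i).continuous.comp (g := fun p : ℝ × ℝ => q i p.1 p.2)
      (f := fun p : ℝ × ℝ => (x + p.2, h * p.1)) (by fun_prop)
  · exact continuous_const.mul (Continuous.mul (by fun_prop) (FT_cont hu.int0))
  · intro L
    obtain ⟨C, hC, hb⟩ := (hu 2).FT_decay (by norm_num) (by simp) L
    refine ⟨‖(2 * Real.pi : ℂ)⁻¹‖ * C, by positivity, fun ξ => ?_⟩
    have hn : ‖Complex.exp (Complex.I * x * ξ)‖ = 1 := by rw [Complex.norm_exp]; simp
    rw [norm_mul, norm_mul, hn, one_mul, mul_assoc]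
    refine mul_le_mul_of_nonneg_left ?_ (norm_nonneg _)
    simpa using hb () ξ
  · rw [Op, ← integral_const_mul]
    congr 1; funext ξ
    rw [show Complex.exp (Complex.I * ((x + y : ℝ) : ℂ) * ξ) = Complex.exp (Complex.I * x * ξ) *
      Complex.exp (Complex.I * ξ * y) by rw [← Complex.exp_add]; congr 1; push_cast; ring]
    ring

lemma Op_int (hq : Sy m₁ q) (hm : Tmp m₁ N₁) (i : ι) (h : ℝ) {u : ℝ → ℂ} (hu : Sw u) (x : ℝ) :
    Integrable (fun ξ : ℝ => Complex.exp (Complex.I * x * ξ) * q i x (h * ξ) * FT u ξ) := by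
  have hF := symF0 hq hm i h x
  obtain ⟨C, hC, hb⟩ := (hu 2).FT_decay (by norm_num) (by simp) (N₁ + 2)
  obtain ⟨D, hD, hg⟩ := hF.2 0
  refine int_of_bd (Continuous.mul (Continuous.mul (by fun_prop) (hF.1 ()).continuous) (FT_cont hu.int0))
    (D * C) fun y => ?_
  have hn : ‖Complex.exp (Complex.I * x * y)‖ = 1 := by rw [Complex.norm_exp]; simp
  have a := hb () y
  have b := hg () y
  rw [mul_one] at a b
  rw [iteratedDeriv_zero, zpow_natCast] at b
  rw [norm_mul, norm_mul, hn, one_mul]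
  have := jb_pos y
  refine (mul_le_mul b a (norm_nonneg _) (by positivity)).trans (le_of_eq ?_)
  rw [← jb_mul y N₁]; ring

/-- linearity in the symbol -/
lemma Op_lin (hq : Sy m₁ q) (hm : Tmp m₁ N₁) (he : Sy m₂ e) (hm₂ : Tmp m₂ N₂) (i : ι) (h : ℝ)
    {u : ℝ → ℂ} (hu : Sw u) (x : ℝ) (c : ℂ) :
    Op h (fun x ξ => q i x ξ + c * e i x ξ) u x = Op h (q i) u x + c * Op h (e i) u x := by
  unfold Op
  rw [mul_left_comm, ← mul_add, ← integral_const_mul c, ← integral_add (Op_int hq hm i h hu x)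
    ((Op_int he hm₂ i h hu x).const_mul c)]
  congr 2; funext ξ; ring

end Op

lemma schwartz_Sw (u : SchwartzMap ℝ ℂ) : Sw u := by
  intro L
  refine ⟨fun _ => u.smooth (⊤ : ℕ∞), fun k => ?_⟩
  obtain ⟨C, hC⟩ := u.decay L k
  obtain ⟨D, hD⟩ := u.decay 0 k
  have hC0 : 0 ≤ C := (by positivity : (0 : ℝ) ≤ ‖(0:ℝ)‖ ^ L * ‖iteratedFDeriv ℝ k u 0‖).trans (hC.2 0)
  have hD0 : 0 ≤ D := (by positivity : (0 : ℝ) ≤ ‖(0:ℝ)‖ ^ 0 * ‖iteratedFDeriv ℝ k u 0‖).trans (hD.2 0)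
  refine ⟨2 ^ L * (D + C), by positivity, fun _ y => ?_⟩
  have a := hC.2 y
  have b := hD.2 y
  rw [norm_iteratedFDeriv_eq_norm_iteratedDeriv, Real.norm_eq_abs] at a b
  rw [pow_zero, one_mul] at b
  rw [mul_one, zpow_neg, zpow_natCast, ← div_eq_mul_inv, le_div_iff₀ (pow_pos (jb_pos y) L)]
  have h1 : (1 + |y|) ^ L ≤ 2 ^ L * (1 + |y| ^ L) := by
    have : (1 + |y|) ^ L ≤ (2 * max 1 |y|) ^ L := by
      refine pow_le_pow_left₀ (jb_pos y).le ?_ L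
      linarith [le_max_left 1 |y|, le_max_right 1 |y|]
    refine this.trans ?_
    rw [mul_pow]
    refine mul_le_mul_of_nonneg_left ?_ (by positivity)
    rcases le_total 1 |y| with h | h
    · rw [max_eq_right h]; linarith
    · rw [max_eq_left h, one_pow]; linarith [pow_nonneg (abs_nonneg y) L]
  calc _ ≤ ‖iteratedDeriv k u y‖ * (2 ^ L * (1 + |y| ^ L)) :=
        mul_le_mul_of_nonneg_left h1 (norm_nonneg _)
    _ = 2 ^ L * (‖iteratedDeriv k u y‖ + |y| ^ L * ‖iteratedDeriv k u y‖) := by ring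
    _ ≤ _ := by gcongr

/-! ### Elliptic division -/

section Div

variable {ι : Type} {m m' : ℝ → ℝ → ℝ} {a b e q : ι → ℝ → ℝ → ℂ} {T : Set (ℝ × ℝ)}

def Supp (T : Set (ℝ × ℝ)) (b : ι → ℝ → ℝ → ℂ) : Prop := ∀ i x ξ, (x, ξ) ∉ T → b i x ξ = 0

lemma Supp.dx (hT : IsClosed T) (h : Supp T b) : Supp T (fun i => Dx (b i)) := by
  intro i x ξ hx
  have hc : ContinuousAt (fun x' : ℝ => (x', ξ)) x := by fun_prop
  have : ∀ᶠ x' in 𝓝 x, (x', ξ) ∉ T := hc.eventually (hT.isOpen_compl.mem_nhds hx)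
  have h2 : (fun x' => b i x' ξ) =ᶠ[𝓝 x] fun _ => 0 := this.mono fun x' hx' => h i x' ξ hx'
  change deriv _ x = 0
  rw [h2.deriv_eq]; simp

lemma Supp.dk (hT : IsClosed T) (h : Supp T b) : Supp T (fun i => Dk (b i)) := by
  intro i x ξ hx
  have hc : ContinuousAt (fun ξ' : ℝ => (x, ξ')) ξ := by fun_prop
  have : ∀ᶠ ξ' in 𝓝 ξ, (x, ξ') ∉ T := hc.eventually (hT.isOpen_compl.mem_nhds hx)
  have h2 : (b i x) =ᶠ[𝓝 ξ] fun _ => 0 := this.mono fun x' hx' => h i x x' hx'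
  change deriv _ ξ = 0
  rw [h2.deriv_eq]; simp

lemma Supp.itx (hT : IsClosed T) (h : Supp T b) (n : ℕ) : Supp T (fun i => Dx^[n] (b i)) := by
  induction n generalizing b with
  | zero => exact h
  | succ n ih => exact ih (b := fun i => Dx (b i)) (h.dx hT)

lemma Supp.itk (hT : IsClosed T) (h : Supp T b) (n : ℕ) : Supp T (fun i => Dk^[n] (b i)) := by
  induction n generalizing b with
  | zero => exact h
  | succ n ih => exact ih (b := fun i => Dk (b i)) (h.dk hT)

lemma div_sm (hT : IsClosed T) (hb : ∀ i, Sm2 (b i)) (hs : Supp T b) (he : ∀ i, Sm2 (e i))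
    (h0 : ∀ i x ξ, (x, ξ) ∈ T → e i x ξ ≠ 0) (i : ι) : Sm2 (fun x ξ => b i x ξ / e i x ξ) := by
  refine contDiff_iff_contDiffAt.2 fun p => ?_
  obtain ⟨x, ξ⟩ := p
  by_cases hp : (x, ξ) ∈ T
  · have hb' : ContDiff ℝ (⊤ : ℕ∞) (fun q : ℝ × ℝ => b i q.1 q.2) := hb i
    have he' : ContDiff ℝ (⊤ : ℕ∞) (fun q : ℝ × ℝ => e i q.1 q.2) := he i
    simp_rw [div_eq_mul_inv]
    exact hb'.contDiffAt.mul (he'.contDiffAt.inv (h0 i x ξ hp))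
  · have : (fun q : ℝ × ℝ => b i q.1 q.2 / e i q.1 q.2) =ᶠ[𝓝 (x, ξ)] fun _ => 0 := by
      filter_upwards [hT.isOpen_compl.mem_nhds hp] with q hq
      rw [hs i q.1 q.2 hq, zero_div]
    exact contDiffAt_const.congr_of_eventuallyEq this

lemma div_supp (hs : Supp T b) (e : ι → ℝ → ℝ → ℂ) : Supp T (fun i x ξ => b i x ξ / e i x ξ) :=
  fun i x ξ h => by
    change b i x ξ / e i x ξ = 0
    rw [hs i x ξ h, zero_div]

lemma div_dx (hT : IsClosed T) (hb : ∀ i, Sm2 (b i)) (hs : Supp T b) (he : ∀ i, Sm2 (e i))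
    (h0 : ∀ i x ξ, (x, ξ) ∈ T → e i x ξ ≠ 0) (i : ι) : Dx (fun x ξ => b i x ξ / e i x ξ) =
      fun x ξ => (Dx (b i) x ξ + (b i x ξ / e i x ξ) * ((-1) * Dx (e i) x ξ)) / e i x ξ := by
  funext x ξ
  by_cases hp : (x, ξ) ∈ T
  · have h := h0 i x ξ hp
    refine (((hb i).hx x ξ).fun_div ((he i).hx x ξ) h).deriv.trans ?_
    field_simp
    ring
  · have z1 : Dx (fun x ξ => b i x ξ / e i x ξ) x ξ = 0 := (div_supp hs e).dx hT i x ξ hp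
    have z2 : Dx (b i) x ξ = 0 := hs.dx hT i x ξ hp
    rw [z1, z2, hs i x ξ hp]; simp

lemma div_dk (hT : IsClosed T) (hb : ∀ i, Sm2 (b i)) (hs : Supp T b) (he : ∀ i, Sm2 (e i))
    (h0 : ∀ i x ξ, (x, ξ) ∈ T → e i x ξ ≠ 0) (i : ι) : Dk (fun x ξ => b i x ξ / e i x ξ) =
      fun x ξ => (Dk (b i) x ξ + (b i x ξ / e i x ξ) * ((-1) * Dk (e i) x ξ)) / e i x ξ := by
  funext x ξ
  by_cases hp : (x, ξ) ∈ T
  · have h := h0 i x ξ hp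
    refine (((hb i).hk x ξ).fun_div ((he i).hk x ξ) h).deriv.trans ?_
    field_simp
    ring
  · have z1 : Dk (fun x ξ => b i x ξ / e i x ξ) x ξ = 0 := (div_supp hs e).dk hT i x ξ hp
    have z2 : Dk (b i) x ξ = 0 := hs.dk hT i x ξ hp
    rw [z1, z2, hs i x ξ hp]; simp

lemma div_bnd (hb : Bnd m' b) (hs : Supp T b) (hm : ∀ x ξ, 0 < m x ξ) (hm' : ∀ x ξ, 0 ≤ m' x ξ)
    {c : ℝ} (hc : 0 < c) (hl : ∀ i x ξ, (x, ξ) ∈ T → c * m x ξ ≤ ‖e i x ξ‖) :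
    Bnd (fun x ξ => m' x ξ * (m x ξ)⁻¹) (fun i x ξ => b i x ξ / e i x ξ) := by
  obtain ⟨C, hC, h⟩ := hb
  refine ⟨C * c⁻¹, by positivity, fun i x ξ => ?_⟩
  have p := hm x ξ
  have p' := hm' x ξ
  by_cases hp : (x, ξ) ∈ T
  · rw [norm_div]
    calc _ ≤ (C * m' x ξ) / (c * m x ξ) :=
          div_le_div₀ (by positivity) (h i x ξ) (by positivity) (hl i x ξ hp)
      _ = _ := by field_simp
  · beta_reduce
    rw [hs i x ξ hp, zero_div, norm_zero]; positivity

lemma div_cl (hT : IsClosed T) (hm : ∀ x ξ, 0 < m x ξ) (he : Sy m e)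
    {c : ℝ} (hc : 0 < c) (hl : ∀ i x ξ, (x, ξ) ∈ T → c * m x ξ ≤ ‖e i x ξ‖)
    (hm' : ∀ x ξ, 0 ≤ m' x ξ) (n : ℕ) (b : ι → ℝ → ℝ → ℂ) (hb : ∀ i, Sm2 (b i)) (hs : Supp T b)
    (hcl : Cl m' n b) :
    Cl (fun x ξ => m' x ξ * (m x ξ)⁻¹) n (fun i x ξ => b i x ξ / e i x ξ) := by
  have h0 : ∀ i x ξ, (x, ξ) ∈ T → e i x ξ ≠ 0 := fun i x ξ h => by
    have h1 := hl i x ξ h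
    have h2 := mul_pos hc (hm x ξ)
    exact norm_pos_iff.1 (h2.trans_le h1)
  have hw : ∀ x ξ, 0 ≤ m' x ξ * (m x ξ)⁻¹ := fun x ξ =>
    mul_nonneg (hm' x ξ) (inv_nonneg.2 (hm x ξ).le)
  have ew : (fun x ξ => (m' x ξ * (m x ξ)⁻¹) * m x ξ) = m' := by
    funext x ξ
    rw [inv_mul_cancel_right₀ (hm x ξ).ne']
  induction n generalizing b with
  | zero => exact div_bnd hcl hs hm hm' hc hl
  | succ n ih =>
    have hd := div_sm hT hb hs he.1 h0
    have hds := div_supp hs e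
    have hi := ih b hb hs hcl.down
    refine ⟨div_bnd hcl.bnd hs hm hm' hc hl, ?_, ?_⟩
    · simp_rw [fun i => div_dx hT hb hs he.1 h0 i]
      have he' := he.dx.cmul (fun _ => -1) 1 (by simp)
      refine ih (fun i x ξ => Dx (b i) x ξ + (b i x ξ / e i x ξ) * ((-1) * Dx (e i) x ξ)) (fun i => ?_)
        (fun i x ξ hp => ?_) ?_
      · exact (hb i).dx.add ((hd i).mul (he'.1 i))
      · change Dx (b i) x ξ + (b i x ξ / e i x ξ) * ((-1) * Dx (e i) x ξ) = 0
        have z2 : Dx (b i) x ξ = 0 := hs.dx hT i x ξ hp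
        rw [z2, hs i x ξ hp]; simp
      · have := Cl.mul hd he'.1 hi (he'.2 n) hw
        rw [ew] at this
        exact Cl.add (fun i => (hb i).dx) (fun i => (hd i).mul (he'.1 i)) hcl.2.1 this
    · simp_rw [fun i => div_dk hT hb hs he.1 h0 i]
      have he' := he.dk.cmul (fun _ => -1) 1 (by simp)
      refine ih (fun i x ξ => Dk (b i) x ξ + (b i x ξ / e i x ξ) * ((-1) * Dk (e i) x ξ)) (fun i => ?_)
        (fun i x ξ hp => ?_) ?_
      · exact (hb i).dk.add ((hd i).mul (he'.1 i))
      · change Dk (b i) x ξ + (b i x ξ / e i x ξ) * ((-1) * Dk (e i) x ξ) = 0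
        have z2 : Dk (b i) x ξ = 0 := hs.dk hT i x ξ hp
        rw [z2, hs i x ξ hp]; simp
      · have := Cl.mul hd he'.1 hi (he'.2 n) hw
        rw [ew] at this
        exact Cl.add (fun i => (hb i).dk) (fun i => (hd i).mul (he'.1 i)) hcl.2.2 this

/-- division by an elliptic symbol -/
lemma div_sy (hT : IsClosed T) (hm : ∀ x ξ, 0 < m x ξ) (he : Sy m e)
    {c : ℝ} (hc : 0 < c) (hl : ∀ i x ξ, (x, ξ) ∈ T → c * m x ξ ≤ ‖e i x ξ‖)
    (hb : Sy (fun _ _ => 1) b) (hs : Supp T b) :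
    Sy (fun x ξ => (m x ξ)⁻¹) (fun i x ξ => b i x ξ / e i x ξ) := by
  refine ⟨div_sm hT hb.1 hs he.1 fun i x ξ h => ?_, fun n => ?_⟩
  · have h1 := hl i x ξ h
    have h2 := mul_pos hc (hm x ξ)
    exact norm_pos_iff.1 (h2.trans_le h1)
  · have := div_cl hT hm he hc hl (m' := fun _ _ => 1) (fun _ _ => zero_le_one) n b hb.1 hs (hb.2 n)
    simpa only [one_mul] using this

/-- the iterative construction -/
lemma construct (hT : IsClosed T) (hm : ∀ x ξ, 0 < m x ξ) (he : Sy m e)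
    {c : ℝ} (hc : 0 < c) (hl : ∀ i x ξ, (x, ξ) ∈ T → c * m x ξ ≤ ‖e i x ξ‖)
    (ha : Sy (fun _ _ => 1) a) (hs : Supp T a) (t : ι → ℝ) (ht : ∀ i, 0 < t i ∧ t i ≤ 1)
    (P S : (ι → ℝ → ℝ → ℂ) → (ι → ℝ → ℝ → ℂ))
    (hP : ∀ b, Sy (fun x ξ => (m x ξ)⁻¹) b → ∀ i x ξ, P b i x ξ = e i x ξ * b i x ξ + t i * S b i x ξ)
    (hS : ∀ b, Sy (fun x ξ => (m x ξ)⁻¹) b → Supp T b → Sy (fun _ _ => 1) (S b) ∧ Supp T (S b))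
    (hlin : ∀ b b' : ι → ℝ → ℝ → ℂ, Sy (fun x ξ => (m x ξ)⁻¹) b → Sy (fun x ξ => (m x ξ)⁻¹) b' → ∀ k : ι → ℂ,
      ∀ i x ξ, P (fun i x ξ => b i x ξ + k i * b' i x ξ) i x ξ = P b i x ξ + k i * P b' i x ξ) (n : ℕ) :
    ∃ q₁ b : ι → ℝ → ℝ → ℂ, Sy (fun x ξ => (m x ξ)⁻¹) q₁ ∧ Sy (fun _ _ => 1) b ∧ Supp T b ∧
      ∀ i x ξ, P (fun i x ξ => a i x ξ / e i x ξ + t i * q₁ i x ξ) i x ξ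
        = a i x ξ + (t i : ℂ) ^ (n + 1) * b i x ξ := by
  have h0 : ∀ i x ξ, (x, ξ) ∈ T → e i x ξ ≠ 0 := fun i x ξ h => by
    have h1 := hl i x ξ h
    have h2 := mul_pos hc (hm x ξ)
    exact norm_pos_iff.1 (h2.trans_le h1)
  have can : ∀ b : ι → ℝ → ℝ → ℂ, Supp T b → ∀ i x ξ, e i x ξ * (b i x ξ / e i x ξ) = b i x ξ := by
    intro b hb i x ξ
    by_cases hp : (x, ξ) ∈ T
    · exact mul_div_cancel₀ _ (h0 i x ξ hp)
    · rw [hb i x ξ hp]; simp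
  have tn : ∀ i, ‖(t i : ℂ)‖ ≤ 1 := fun i => by
    rw [Complex.norm_real, Real.norm_of_nonneg (ht i).1.le]; exact (ht i).2
  have hq0 := div_sy hT hm he hc hl ha hs
  induction n with
  | zero =>
    obtain ⟨h1, h2⟩ := hS _ hq0 (div_supp hs e)
    refine ⟨fun _ _ _ => 0, _, Sy.zero fun x ξ => (inv_pos.2 (hm x ξ)).le, h1, h2, fun i x ξ => ?_⟩
    simp only [mul_zero, add_zero]
    rw [hP _ hq0, can a hs]; simp
  | succ n ih =>
    obtain ⟨q₁, b, hq₁, hb, hbs, hPb⟩ := ih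
    have hd := div_sy hT hm he hc hl hb hbs
    have hds := div_supp hbs e
    obtain ⟨h1, h2⟩ := hS _ hd hds
    refine ⟨fun i x ξ => q₁ i x ξ + (-(t i : ℂ) ^ n) * (b i x ξ / e i x ξ), fun i x ξ => (-1) * S _ i x ξ,
      hq₁.add (hd.cmul _ 1 fun i => ?_), h1.cmul (fun _ => -1) 1 (by simp), fun i x ξ hp => ?_, fun i x ξ => ?_⟩
    · rw [norm_neg, norm_pow]; exact pow_le_one₀ (norm_nonneg _) (tn i)
    · change (-1) * S _ i x ξ = 0
      rw [h2 i x ξ hp, mul_zero]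
    · have e1 : (fun i x ξ => a i x ξ / e i x ξ + t i * (q₁ i x ξ + (-(t i : ℂ) ^ n) * (b i x ξ / e i x ξ)))
        = fun i x ξ => (a i x ξ / e i x ξ + t i * q₁ i x ξ) + (-(t i : ℂ) ^ (n + 1)) * (b i x ξ / e i x ξ) := by
        funext i x ξ; ring
      rw [e1, hlin _ _ (hq0.add (hq₁.cmul _ 1 tn)) hd, hPb, hP _ hd, can b hbs]
      ring

end Div

section Fin

variable {ι : Type} {m m₁ m₂ : ℝ → ℝ → ℝ} {a b e q f g : ι → ℝ → ℝ → ℂ} {T : Set (ℝ × ℝ)}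

def SS (N : ℕ) (t : ι → ℝ) (f g : ι → ℝ → ℝ → ℂ) (i : ι) (x ξ : ℝ) : ℂ :=
  ∑ k ∈ Finset.range N, ((-Complex.I) * (-Complex.I * t i) ^ k / ((k + 1).factorial : ℂ)) *
    ((Dk^[k + 1] (f i)) x ξ * (Dx^[k + 1] (g i)) x ξ)

lemma TS_SS (N : ℕ) (t : ι → ℝ) (f g : ι → ℝ → ℝ → ℂ) (i : ι) (x ξ : ℝ) :
    TS (N + 1) (t i) (f i) (g i) x ξ = f i x ξ * g i x ξ + t i * SS N t f g i x ξ := by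
  unfold TS SS
  rw [Finset.sum_range_succ', add_comm, Finset.mul_sum]
  congr 1
  · simp
  · refine Finset.sum_congr rfl fun k _ => ?_
    rw [pow_succ]; ring

lemma SS_sy (N : ℕ) (t : ι → ℝ) (ht : ∀ i, 0 < t i ∧ t i ≤ 1) (hm₁ : ∀ x ξ, 0 ≤ m₁ x ξ)
    (hm₂ : ∀ x ξ, 0 ≤ m₂ x ξ) (hf : Sy m₁ f) (hg : Sy m₂ g) :
    Sy (fun x ξ => m₁ x ξ * m₂ x ξ) (SS N t f g) := by
  refine Sy.sum (Finset.range N) _ (fun x ξ => mul_nonneg (hm₁ x ξ) (hm₂ x ξ)) fun k _ => ?_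
  refine ((hf.itk (k + 1)).mul (hg.itx (k + 1)) hm₁).cmul _ 1 fun i => ?_
  have h1 : ‖(t i : ℂ)‖ ≤ 1 := by
    rw [Complex.norm_real, Real.norm_of_nonneg (ht i).1.le]; exact (ht i).2
  have h2 : (1 : ℝ) ≤ ((k + 1).factorial : ℝ) := by exact_mod_cast Nat.succ_le_of_lt (Nat.factorial_pos _)
  rw [norm_div, norm_mul, norm_pow, norm_mul, norm_neg, Complex.norm_I, one_mul, one_mul,
    Complex.norm_natCast]
  exact div_le_one_of_le₀ ((pow_le_one₀ (norm_nonneg _) h1).trans h2) (by positivity)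

lemma SS_supp_right (hT : IsClosed T) (N : ℕ) (t : ι → ℝ) (f : ι → ℝ → ℝ → ℂ) (hg : Supp T g) :
    Supp T (SS N t f g) := fun i x ξ hp => Finset.sum_eq_zero fun k _ => by
  have : (Dx^[k + 1] (g i)) x ξ = 0 := hg.itx hT (k + 1) i x ξ hp
  rw [this]; simp

lemma SS_supp_left (hT : IsClosed T) (N : ℕ) (t : ι → ℝ) (g : ι → ℝ → ℝ → ℂ) (hf : Supp T f) :
    Supp T (SS N t f g) := fun i x ξ hp => Finset.sum_eq_zero fun k _ => by
  have : (Dk^[k + 1] (f i)) x ξ = 0 := hf.itk hT (k + 1) i x ξ hp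
  rw [this]; simp

lemma itx_lin {a b : ℝ → ℝ → ℂ} (ha : Sm2 a) (hb : Sm2 b) (c : ℂ) (n : ℕ) :
    Dx^[n] (fun x ξ => a x ξ + c * b x ξ) = fun x ξ => (Dx^[n] a) x ξ + c * (Dx^[n] b) x ξ := by
  induction n generalizing a b with
  | zero => rfl
  | succ n ih =>
    have : Dx (fun x ξ => a x ξ + c * b x ξ) = fun x ξ => Dx a x ξ + c * Dx b x ξ := by
      funext x ξ; exact ((ha.hx x ξ).add ((hb.hx x ξ).const_mul c)).deriv
    rw [Function.iterate_succ_apply, this, ih ha.dx hb.dx]; rfl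

lemma itk_lin {a b : ℝ → ℝ → ℂ} (ha : Sm2 a) (hb : Sm2 b) (c : ℂ) (n : ℕ) :
    Dk^[n] (fun x ξ => a x ξ + c * b x ξ) = fun x ξ => (Dk^[n] a) x ξ + c * (Dk^[n] b) x ξ := by
  induction n generalizing a b with
  | zero => rfl
  | succ n ih =>
    have : Dk (fun x ξ => a x ξ + c * b x ξ) = fun x ξ => Dk a x ξ + c * Dk b x ξ := by
      funext x ξ; exact ((ha.hk x ξ).add ((hb.hk x ξ).const_mul c)).deriv
    rw [Function.iterate_succ_apply, this, ih ha.dk hb.dk]; rfl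

lemma TS_lin_right (M : ℕ) (h : ℝ) (f : ℝ → ℝ → ℂ) {a b : ℝ → ℝ → ℂ} (ha : Sm2 a) (hb : Sm2 b)
    (c : ℂ) (x ξ : ℝ) : TS M h f (fun x ξ => a x ξ + c * b x ξ) x ξ =
      TS M h f a x ξ + c * TS M h f b x ξ := by
  unfold TS
  rw [Finset.mul_sum, ← Finset.sum_add_distrib]
  refine Finset.sum_congr rfl fun k _ => ?_
  rw [itx_lin ha hb]; ring

lemma TS_lin_left (M : ℕ) (h : ℝ) (f : ℝ → ℝ → ℂ) {a b : ℝ → ℝ → ℂ} (ha : Sm2 a) (hb : Sm2 b)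
    (c : ℂ) (x ξ : ℝ) : TS M h (fun x ξ => a x ξ + c * b x ξ) f x ξ =
      TS M h a f x ξ + c * TS M h b f x ξ := by
  unfold TS
  rw [Finset.mul_sum, ← Finset.sum_add_distrib]
  refine Finset.sum_congr rfl fun k _ => ?_
  rw [itk_lin ha hb]; ring

/-- from the symbolic identity to the operator identity -/
lemma finish {N₁ N₂ N : ℕ} (hm₁ : Tmp m₁ N₁) (hm₂ : Tmp m₂ N₂) (h1 : ∀ x ξ, m₁ x ξ * m₂ x ξ = 1)
    (t : ι → ℝ) (ht : ∀ i, 0 < t i ∧ t i ≤ 1) (hf : Sy m₁ f) (hg : Sy m₂ g)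
    (hb : Sy (fun _ _ => 1) b)
    (H : ∀ i x ξ, TS (N + 1) (t i) (f i) (g i) x ξ = a i x ξ + (t i : ℂ) ^ (N + 1) * b i x ξ) :
    ∃ r : ι → ℝ → ℝ → ℂ, Sy (fun _ _ => 1) r ∧ ∀ i (u : ℝ → ℂ), Sw u → ∀ x,
      Op (t i) (a i) u x = Op (t i) (f i) (Op (t i) (g i) u) x + (t i : ℂ) ^ N * Op (t i) (r i) u x := by
  have e1 : (fun x ξ => m₁ x ξ * m₂ x ξ) = fun _ _ => 1 := by funext x ξ; exact h1 x ξ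
  have hR := RR_sy hm₁ hm₂ (K := N₁ + 4) le_rfl (N + 1) t ht hf hg
  have hI := II_sy hm₁ hm₂ (K := N₁ + 4) le_rfl t ht hf hg
  rw [e1] at hR hI
  have T1 : Tmp (fun _ _ => 1) 0 := ⟨fun _ _ => one_pos, 1, zero_le_one, by simp⟩
  have hr : Sy (fun _ _ => 1) (fun i x ξ => (-(t i : ℂ)) *
      (b i x ξ + RR (N₁ + 4) (N + 1) (t i) (f i) (g i) x ξ)) :=
    (hb.add hR).cmul _ 1 fun i => by
      rw [norm_neg, Complex.norm_real, Real.norm_of_nonneg (ht i).1.le]; exact (ht i).2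
  refine ⟨_, hr, fun i u hu x => ?_⟩
  rw [Op_comp hf hm₁ hg hm₂ (K := N₁ + 4) (by omega) i (ht i) hu, ← Op_lin hI T1 hr T1 i _ hu]
  congr 1
  funext x ξ
  rw [II_eq (N₁ + 4) (N + 1) (ht i).1, H]
  ring

variable {N₁ N₂ : ℕ}

lemma main_right (N : ℕ) (hT : IsClosed T) (hm : Tmp m N₁) (hmi : Tmp (fun x ξ => (m x ξ)⁻¹) N₂)
    (he : Sy m e) {c : ℝ} (hc : 0 < c) (hl : ∀ i x ξ, (x, ξ) ∈ T → c * m x ξ ≤ ‖e i x ξ‖)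
    (ha : Sy (fun _ _ => 1) a) (hs : Supp T a) (t : ι → ℝ) (ht : ∀ i, 0 < t i ∧ t i ≤ 1) :
    ∃ q₁ r : ι → ℝ → ℝ → ℂ, Sy (fun x ξ => (m x ξ)⁻¹) q₁ ∧
      Sy (fun x ξ => (m x ξ)⁻¹) (fun i x ξ => a i x ξ / e i x ξ + t i * q₁ i x ξ) ∧
      Sy (fun _ _ => 1) r ∧ ∀ i (u : ℝ → ℂ), Sw u → ∀ x,
      Op (t i) (a i) u x = Op (t i) (e i) (Op (t i) (fun x ξ => a i x ξ / e i x ξ + t i * q₁ i x ξ) u) x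
        + (t i : ℂ) ^ N * Op (t i) (r i) u x := by
  have e1 : ∀ x ξ, m x ξ * (m x ξ)⁻¹ = 1 := fun x ξ => mul_inv_cancel₀ (hm.1 x ξ).ne'
  obtain ⟨q₁, b, h1, h2, h3, h4⟩ := construct hT hm.1 he hc hl ha hs t ht
    (fun q i => TS (N + 1) (t i) (e i) (q i)) (fun q => SS N t e q)
    (fun q _ i x ξ => TS_SS N t e q i x ξ)
    (fun q hq hqs => ⟨by
      simpa only [e1] using SS_sy N t ht (fun x ξ => (hm.1 x ξ).le) (fun x ξ => (hmi.1 x ξ).le) he hq,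
      SS_supp_right hT N t e hqs⟩)
    (fun b b' hb hb' k i x ξ => TS_lin_right (N + 1) (t i) (e i) (hb.1 i) (hb'.1 i) (k i) x ξ) N
  have hq : Sy (fun x ξ => (m x ξ)⁻¹) (fun i x ξ => a i x ξ / e i x ξ + t i * q₁ i x ξ) :=
    (div_sy hT hm.1 he hc hl ha hs).add (h1.cmul _ 1 fun i => by
      rw [Complex.norm_real, Real.norm_of_nonneg (ht i).1.le]; exact (ht i).2)
  obtain ⟨r, hr, H⟩ := finish hm hmi e1 t ht he hq h2 h4
  exact ⟨q₁, r, h1, hq, hr, H⟩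

lemma main_left (N : ℕ) (hT : IsClosed T) (hm : Tmp m N₁) (hmi : Tmp (fun x ξ => (m x ξ)⁻¹) N₂)
    (he : Sy m e) {c : ℝ} (hc : 0 < c) (hl : ∀ i x ξ, (x, ξ) ∈ T → c * m x ξ ≤ ‖e i x ξ‖)
    (ha : Sy (fun _ _ => 1) a) (hs : Supp T a) (t : ι → ℝ) (ht : ∀ i, 0 < t i ∧ t i ≤ 1) :
    ∃ q r : ι → ℝ → ℝ → ℂ, Sy (fun x ξ => (m x ξ)⁻¹) q ∧
      Sy (fun _ _ => 1) r ∧ ∀ i (u : ℝ → ℂ), Sw u → ∀ x,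
      Op (t i) (a i) u x = Op (t i) (q i) (Op (t i) (e i) u) x
        + (t i : ℂ) ^ N * Op (t i) (r i) u x := by
  have e1 : ∀ x ξ, (m x ξ)⁻¹ * m x ξ = 1 := fun x ξ => inv_mul_cancel₀ (hm.1 x ξ).ne'
  obtain ⟨q₁, b, h1, h2, h3, h4⟩ := construct hT hm.1 he hc hl ha hs t ht
    (fun q i => TS (N + 1) (t i) (q i) (e i)) (fun q => SS N t q e)
    (fun q _ i x ξ => (TS_SS N t q e i x ξ).trans (by ring))
    (fun q hq hqs => ⟨by
      simpa only [e1] using SS_sy N t ht (fun x ξ => (hmi.1 x ξ).le) (fun x ξ => (hm.1 x ξ).le) hq he,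
      SS_supp_left hT N t e hqs⟩)
    (fun b b' hb hb' k i x ξ => TS_lin_left (N + 1) (t i) (e i) (hb.1 i) (hb'.1 i) (k i) x ξ) N
  have hq : Sy (fun x ξ => (m x ξ)⁻¹) (fun i x ξ => a i x ξ / e i x ξ + t i * q₁ i x ξ) :=
    (div_sy hT hm.1 he hc hl ha hs).add (h1.cmul _ 1 fun i => by
      rw [Complex.norm_real, Real.norm_of_nonneg (ht i).1.le]; exact (ht i).2)
  obtain ⟨r, hr, H⟩ := finish hmi hm e1 t ht hq he h2 h4
  exact ⟨_, r, hq, hr, H⟩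

end Fin

/-! ### Conversion -/

lemma SymS.sy {m : ℝ → ℝ → ℝ} {a : ℝ → ℝ → ℝ → ℂ} (h : SymS m a) (hm : ∀ x ξ, 0 < m x ξ) :
    Sy m (fun i : Set.Ioc (0:ℝ) 1 => a i.1) := by
  refine Sy.of_pd (fun i => h.1 i.1 i.2) fun α β => ?_
  obtain ⟨C, hC⟩ := h.2 α β
  refine ⟨max C 0, le_max_right _ _, fun i x ξ => ?_⟩
  have := hC i.1 i.2 x ξ
  rw [pd_eq] at this
  exact this.trans (mul_le_mul_of_nonneg_right (le_max_left _ _) (hm x ξ).le)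

lemma SymS.of_sy {m : ℝ → ℝ → ℝ} {a : ℝ → ℝ → ℝ → ℂ} (h : Sy m (fun i : Set.Ioc (0:ℝ) 1 => a i.1)) :
    SymS m a := by
  refine ⟨fun t ht => h.1 ⟨t, ht⟩, fun α β => ?_⟩
  obtain ⟨C, _, hC⟩ := h.pd α β
  refine ⟨C, fun t ht x ξ => ?_⟩
  rw [pd_eq]
  exact hC ⟨t, ht⟩ x ξ

open Classical in
def ext0 (b : Set.Ioc (0:ℝ) 1 → ℝ → ℝ → ℂ) (h : ℝ) : ℝ → ℝ → ℂ :=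
  if hh : h ∈ Set.Ioc (0:ℝ) 1 then b ⟨h, hh⟩ else fun _ _ => 0

lemma ext0_eq (b : Set.Ioc (0:ℝ) 1 → ℝ → ℝ → ℂ) {h : ℝ} (hh : h ∈ Set.Ioc (0:ℝ) 1) :
    ext0 b h = b ⟨h, hh⟩ := by
  unfold ext0; rw [dif_pos hh]

lemma ext0_fam (b : Set.Ioc (0:ℝ) 1 → ℝ → ℝ → ℂ) : (fun i : Set.Ioc (0:ℝ) 1 => ext0 b i.1) = b := by
  funext i; exact ext0_eq b i.2

lemma IsOrderFunction.tmp {m : ℝ → ℝ → ℝ} (h : IsOrderFunction m) : ∃ N, Tmp m N := by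
  obtain ⟨h1, _, C, hC, N, h2⟩ := h
  exact ⟨N, h1, C, hC.le, h2⟩

end

/-- Corollary A.3: elliptic division of symbols, with remainders of
arbitrarily high order in `h`; here `e ≥ c·m > 0` on a neighborhood of the support of `a`,
and one may take `q = a/e + h·q₁`. -/
theorem stmt_18 (m : ℝ → ℝ → ℝ) (hm : IsOrderFunction m)
    (hminv : IsOrderFunction (fun x ξ => (m x ξ)⁻¹))
    (a : ℝ → ℝ → ℝ → ℂ) (ha : SymS (fun _ _ => 1) a)
    (e : ℝ → ℝ → ℝ → ℝ) (he : SymS m (fun h x ξ => (Complex.ofReal (e h x ξ))))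
    (c : ℝ) (hc : 0 < c)
    (U : Set (ℝ × ℝ)) (hU : IsOpen U)
    (hsupp : ∀ h ∈ Set.Ioc (0:ℝ) 1, {q : ℝ × ℝ | a h q.1 q.2 ≠ 0} ⊆ U)
    (helow : ∀ h ∈ Set.Ioc (0:ℝ) 1, ∀ q ∈ U, c * m q.1 q.2 ≤ e h q.1 q.2) :
    ∀ N : ℕ,
      (∃ q q₁ r : ℝ → ℝ → ℝ → ℂ,
        SymS (fun x ξ => (m x ξ)⁻¹) q ∧ SymS (fun x ξ => (m x ξ)⁻¹) q₁ ∧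
        SymS (fun _ _ => 1) r ∧
        (∀ h x ξ : ℝ, q h x ξ = a h x ξ / (Complex.ofReal (e h x ξ)) + h * q₁ h x ξ) ∧
        ∀ h ∈ Set.Ioc (0:ℝ) 1, ∀ u : SchwartzMap ℝ ℂ, ∀ x : ℝ,
          Op h (a h) u x =
            Op h (fun x' ξ => Complex.ofReal (e h x' ξ)) (Op h (q h) u) x
              + (h : ℂ) ^ N * Op h (r h) u x) ∧
      (∃ qt rt : ℝ → ℝ → ℝ → ℂ,
        SymS (fun x ξ => (m x ξ)⁻¹) qt ∧ SymS (fun _ _ => 1) rt ∧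
        ∀ h ∈ Set.Ioc (0:ℝ) 1, ∀ u : SchwartzMap ℝ ℂ, ∀ x : ℝ,
          Op h (a h) u x =
            Op h (qt h) (Op h (fun x' ξ => Complex.ofReal (e h x' ξ)) u) x
              + (h : ℂ) ^ N * Op h (rt h) u x) := by
  intro N
  have hpos := hm.1
  obtain ⟨N₁, hT1⟩ := hm.tmp
  obtain ⟨N₂, hT2⟩ := hminv.tmp
  have hA := ha.sy (fun _ _ => one_pos)
  have hE := he.sy hpos
  have hmc : Continuous fun q : ℝ × ℝ => m q.1 q.2 := hm.2.1.continuous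
  have hs : Supp (closure U) (fun i : Set.Ioc (0:ℝ) 1 => a i.1) := by
    intro i x ξ hp
    by_contra hne
    exact hp (subset_closure (hsupp i.1 i.2 (a := (x, ξ)) hne))
  have hl : ∀ (i : Set.Ioc (0:ℝ) 1) (x ξ : ℝ), (x, ξ) ∈ closure U →
      c * m x ξ ≤ ‖(Complex.ofReal (e i.1 x ξ))‖ := by
    intro i x ξ hp
    have hcl : IsClosed {q : ℝ × ℝ | c * m q.1 q.2 ≤ ‖(Complex.ofReal (e i.1 q.1 q.2))‖} :=
      isClosed_le (continuous_const.mul hmc) (he.1 i.1 i.2).continuous.norm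
    refine closure_minimal (fun q hq => ?_) hcl hp
    refine (helow i.1 i.2 q hq).trans ?_
    rw [Complex.norm_real]
    exact le_abs_self _
  have ht : ∀ i : Set.Ioc (0:ℝ) 1, 0 < i.1 ∧ i.1 ≤ 1 := fun i => i.2
  constructor
  · obtain ⟨q₁, r, h1, h2, h3, h4⟩ := main_right N isClosed_closure hT1 hT2 hE hc hl hA hs
      (fun i => i.1) ht
    refine ⟨fun h x ξ => a h x ξ / (Complex.ofReal (e h x ξ)) + h * ext0 q₁ h x ξ, ext0 q₁, ext0 r,
      SymS.of_sy ?_, SymS.of_sy ?_, SymS.of_sy ?_, fun h x ξ => rfl, fun h hh u x => ?_⟩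
    · have := h2
      rw [← ext0_fam q₁] at this
      exact this
    · rw [ext0_fam]; exact h1
    · rw [ext0_fam]; exact h3
    · beta_reduce; rw [ext0_eq q₁ hh, ext0_eq r hh]
      exact h4 ⟨h, hh⟩ u (schwartz_Sw u) x
  · obtain ⟨q, r, h1, h3, h4⟩ := main_left N isClosed_closure hT1 hT2 hE hc hl hA hs
      (fun i => i.1) ht
    refine ⟨ext0 q, ext0 r, SymS.of_sy ?_, SymS.of_sy ?_, fun h hh u x => ?_⟩
    · rw [ext0_fam]; exact h1
    · rw [ext0_fam]; exact h3
    · rw [ext0_eq q hh, ext0_eq r hh]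
      exact h4 ⟨h, hh⟩ u (schwartz_Sw u) x
end
end

section
/- Let I ⊂ ℝ be an open interval, ω : I → ℝ of class C¹, and u : ℝ → ℂ a C¹ function compactly supported in I. Then for every ℏ > 0: ‖u‖_{L^∞(ℝ)}² ≤ 2·ℏ^{−1}·‖u‖_{L²(ℝ)}·‖(ℏD_x − ω′(x))u‖_{L²(ℝ)}, where D_x = −i d/dx. (Consequently, if ‖u‖_{L²} ≤ A and ‖(ℏD_x − ω′)u‖_{L²} ≤ B, then ‖u‖_{L^∞} ≤ √2·ℏ^{−1/2}·(AB)^{1/2}: an L^∞ bound with the gain characteristic of Lagrangian distributions along the graph of ω′.) -/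
open MeasureTheory

/-- the semiclassical Gagliardo–Nirenberg/interpolation inequality
`‖u‖_∞² ≤ 2 ℏ⁻¹ ‖u‖₂ ‖(ℏD_x − ω′(x))u‖₂` for `u` of class `C¹` compactly supported in an
open interval `I` on which `ω` is `C¹`.  Here `D_x = −i d/dx`. -/
theorem stmt_19 (I : Set ℝ) (hIopen : IsOpen I) (hIconn : I.OrdConnected)
    (ω : ℝ → ℝ) (hω : ContDiffOn ℝ 1 ω I)
    (u : ℝ → ℂ) (hu : ContDiff ℝ 1 u)
    (husupp : HasCompactSupport u) (husub : tsupport u ⊆ I)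
    (ℏ : ℝ) (hℏ : 0 < ℏ) :
    (eLpNorm u ⊤ volume) ^ 2 ≤
      ENNReal.ofReal (2 / ℏ) * eLpNorm u 2 volume *
        eLpNorm (fun x => (ℏ : ℂ) * (-Complex.I * deriv u x) - (Complex.ofReal (deriv ω x)) * u x)
          2 volume := by
  set P : ℝ → ℂ := fun x =>
    (ℏ : ℂ) * (-Complex.I * deriv u x) - (Complex.ofReal (deriv ω x)) * u x with hP
  have hPm : Measurable P := by
    have h1 : Measurable (deriv u) := measurable_deriv u
    have h2 : Measurable (deriv ω) := measurable_deriv ω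
    have h3 : Measurable u := hu.continuous.measurable
    exact ((h1.const_mul _).const_mul _).sub ((Complex.measurable_ofReal.comp h2).mul h3)
  -- the squared modulus
  have hF : ContDiff ℝ 1 (fun x => ‖u x‖ ^ 2) := hu.norm_sq ℝ
  have hFs : HasCompactSupport (fun x => ‖u x‖ ^ 2) :=
    husupp.comp_left (g := fun z : ℂ => ‖z‖ ^ 2) (by simp)
  have hd : ∀ x, deriv (fun x => ‖u x‖ ^ 2) x = 2 * inner ℝ (u x) (deriv u x) := fun x =>
    ((hu.differentiable (by norm_num) x).hasDerivAt.norm_sq).deriv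
  have hdb : ∀ x, ‖deriv (fun x => ‖u x‖ ^ 2) x‖ ≤ 2 / ℏ * (‖u x‖ * ‖P x‖) := by
    intro x
    have key : deriv (fun x => ‖u x‖ ^ 2) x = 2 / ℏ * inner ℝ (u x) (Complex.I * P x) := by
      rw [hd, hP]
      simp only [Complex.inner, Complex.mul_re, Complex.mul_im, Complex.sub_re, Complex.sub_im,
        Complex.conj_re, Complex.conj_im, Complex.I_re, Complex.I_im, Complex.ofReal_re,
        Complex.ofReal_im, Complex.neg_re, Complex.neg_im]
      field_simp
      ring
    rw [key, norm_mul, Real.norm_of_nonneg (by positivity : (0:ℝ) ≤ 2 / ℏ)]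
    gcongr
    refine (norm_inner_le_norm (𝕜 := ℝ) _ _).trans ?_
    simp
  have hpt : ∀ x, ‖u x‖ₑ ^ 2 ≤ ENNReal.ofReal (2 / ℏ) * eLpNorm u 2 volume * eLpNorm P 2 volume := by
    intro x
    have h1 : ‖u x‖ₑ ^ 2 = ‖(‖u x‖ ^ 2 : ℝ)‖ₑ := by simp [enorm_pow]
    rw [h1]
    calc ‖(‖u x‖ ^ 2 : ℝ)‖ₑ
        ≤ ∫⁻ y in Set.Iic x, ‖deriv (fun x => ‖u x‖ ^ 2) y‖ₑ :=
          hFs.enorm_le_lintegral_Ici_deriv hF x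
      _ ≤ ∫⁻ y, ‖deriv (fun x => ‖u x‖ ^ 2) y‖ₑ := setLIntegral_le_lintegral _ _
      _ ≤ ∫⁻ y, ENNReal.ofReal (2 / ℏ) * (‖u y‖ₑ * ‖P y‖ₑ) := by
          refine lintegral_mono fun y => ?_
          rw [← ofReal_norm, ← ofReal_norm, ← ofReal_norm, ← ENNReal.ofReal_mul (norm_nonneg _),
            ← ENNReal.ofReal_mul (by positivity)]
          exact ENNReal.ofReal_le_ofReal (hdb y)
      _ = ENNReal.ofReal (2 / ℏ) * ∫⁻ y, ‖u y‖ₑ * ‖P y‖ₑ :=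
          lintegral_const_mul' _ _ ENNReal.ofReal_ne_top
      _ ≤ ENNReal.ofReal (2 / ℏ) * (eLpNorm u 2 volume * eLpNorm P 2 volume) := by
          gcongr
          have := ENNReal.lintegral_mul_le_Lp_mul_Lq volume Real.HolderConjugate.two_two
            (f := fun y => ‖u y‖ₑ) (g := fun y => ‖P y‖ₑ)
            hu.continuous.measurable.enorm.aemeasurable hPm.enorm.aemeasurable
          simpa [eLpNorm_eq_lintegral_rpow_enorm_toReal] using this
      _ = _ := by rw [mul_assoc]
  set C := ENNReal.ofReal (2 / ℏ) * eLpNorm u 2 volume * eLpNorm P 2 volume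
  have hsq : ∀ a : ENNReal, a ^ 2 ≤ C ↔ a ≤ C ^ (1 / 2 : ℝ) := by
    intro a
    rw [one_div, ENNReal.le_rpow_inv_iff (by norm_num), ENNReal.rpow_two]
  rw [hsq, eLpNorm_exponent_top]
  exact essSup_le_of_ae_le _ (Filter.Eventually.of_forall fun x => (hsq _).1 (hpt x))
end
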